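/- arXiv:2605.15499 — 2 statements merged into one kernel-verified Lean document; each statement's English description precedes it below -/
import Mathlib

section
/- Fix constants s > 0, K₁ < 0 < K₂, τ₀ > 0, C₃ > 0, and a differentiable function τ : I → ℝ on an interval I with τ(t) ≥ τ₀ and |τ'(t)| ≤ C₃·τ(t)^{5/4} for all t ∈ I. Set A*(t) = K₁τ(t), ζ*(t) = K₂τ(t), and define ρ₁ = e^{−sA*}(ζ*)^{−3/2} and ρ̂ = e^{−sA*}(ζ*)^{−3/4}. Then there exists a constant C > 0 such that |d/dt (ρ₁(t)²)| ≤ C·ρ̂(t)² for every t ∈ I. -/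
/-- The Carleman weight `ρ₁ = e^{−sA*}(ζ*)^{−3/2}` with `A* = K₁τ`, `ζ* = K₂τ`. -/
noncomputable def rho1 (s K₁ K₂ : ℝ) (τ : ℝ → ℝ) (t : ℝ) : ℝ :=
  Real.exp (-(s * (K₁ * τ t))) * (K₂ * τ t) ^ (-(3:ℝ)/2)

/-- The Carleman weight `ρ̂ = e^{−sA*}(ζ*)^{−3/4}` with `A* = K₁τ`, `ζ* = K₂τ`. -/
noncomputable def rhoHat (s K₁ K₂ : ℝ) (τ : ℝ → ℝ) (t : ℝ) : ℝ :=
  Real.exp (-(s * (K₁ * τ t))) * (K₂ * τ t) ^ (-(3:ℝ)/4)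

/-!
With `w_p(x) = e^{−cx}(Kx)^p`, the squared weight `w_p(τ)²` has logarithmic derivative
`2(p/τ − c)τ'`, which is `O(τ^r)` when `|τ'| ≤ C₃τ^r` and `τ` is bounded below. Replacing `w_p²` by
`w_q²` costs a factor `(Kτ)^{2(p−q)}`, so what remains is the power `τ^{r+2(p−q)}`; it is bounded
because its exponent is nonpositive. For `ρ₁` and `ρ̂` this exponent is `5/4 − 3/2 = −1/4`.
-/

/-- The Carleman weight `e^{−cx}(Kx)^p`, as a function of the value `x` of the singular time profile
`τ`, so that `ρ₁` and `ρ̂` are its compositions with `τ` for `p = −3/2` and `p = −3/4`. The paper's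
parameters `s` and `K₁` enter only through `c = sK₁`. -/
noncomputable def carlemanWeight (c K p x : ℝ) : ℝ :=
  Real.exp (-(c * x)) * (K * x) ^ p

theorem rho1_eq_carlemanWeight (s K₁ K₂ : ℝ) (τ : ℝ → ℝ) (t : ℝ) :
    rho1 s K₁ K₂ τ t = carlemanWeight (s * K₁) K₂ (-(3 : ℝ) / 2) (τ t) := by
  rw [rho1, carlemanWeight, mul_assoc]

theorem rhoHat_eq_carlemanWeight (s K₁ K₂ : ℝ) (τ : ℝ → ℝ) (t : ℝ) :
    rhoHat s K₁ K₂ τ t = carlemanWeight (s * K₁) K₂ (-(3 : ℝ) / 4) (τ t) := by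
  rw [rhoHat, carlemanWeight, mul_assoc]

section CarlemanWeight

variable {c K p q r x x₀ : ℝ}

theorem hasDerivAt_carlemanWeight (hK : K ≠ 0) (hx : x ≠ 0) :
    HasDerivAt (carlemanWeight c K p) ((p / x - c) * carlemanWeight c K p x) x := by
  have hKx : K * x ≠ 0 := mul_ne_zero hK hx
  have hexp : HasDerivAt (fun y => Real.exp (-(c * y))) (Real.exp (-(c * x)) * -(c * 1)) x :=
    ((hasDerivAt_id x).const_mul c).neg.exp
  have hpow : HasDerivAt (fun y => (K * y) ^ p) (K * 1 * p * (K * x) ^ (p - 1)) x :=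
    ((hasDerivAt_id x).const_mul K).rpow_const (Or.inl hKx)
  refine (hexp.mul hpow).congr_deriv ?_
  rw [Real.rpow_sub_one hKx, carlemanWeight]
  field_simp
  ring

theorem hasDerivAt_carlemanWeight_comp_sq {τ : ℝ → ℝ} {τ' t : ℝ} (hK : K ≠ 0) (hτt : τ t ≠ 0)
    (hτ : HasDerivAt τ τ' t) :
    HasDerivAt (fun u => carlemanWeight c K p (τ u) ^ 2)
      (2 * (p / τ t - c) * τ' * carlemanWeight c K p (τ t) ^ 2) t := by
  refine (((hasDerivAt_carlemanWeight hK hτt).comp t hτ).pow 2).congr_deriv ?_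
  simp only [Function.comp_apply]
  ring

theorem carlemanWeight_eq_rpow_sub_mul (hKx : 0 < K * x) :
    carlemanWeight c K p x = (K * x) ^ (p - q) * carlemanWeight c K q x := by
  rw [carlemanWeight, carlemanWeight, mul_left_comm, ← Real.rpow_add hKx, sub_add_cancel]

theorem rpow_mul_carlemanWeight_sq (hK : 0 < K) (hx : 0 < x) :
    x ^ r * carlemanWeight c K p x ^ 2 =
      K ^ (2 * (p - q)) * x ^ (r + 2 * (p - q)) * carlemanWeight c K q x ^ 2 := by
  have hKx : 0 < K * x := mul_pos hK hx
  have hsq : ((K * x) ^ (p - q)) ^ 2 = K ^ (2 * (p - q)) * x ^ (2 * (p - q)) := by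
    rw [← Real.rpow_mul_natCast hKx.le, Nat.cast_ofNat, mul_comm (p - q),
      Real.mul_rpow hK.le hx.le]
  rw [carlemanWeight_eq_rpow_sub_mul (q := q) hKx, mul_pow, hsq, Real.rpow_add hx]
  ring

theorem rpow_mul_carlemanWeight_sq_le (hK : 0 < K) (hx₀ : 0 < x₀) (hx : x₀ ≤ x)
    (hpq : 2 * p + r ≤ 2 * q) :
    x ^ r * carlemanWeight c K p x ^ 2 ≤
      K ^ (2 * (p - q)) * x₀ ^ (r + 2 * (p - q)) * carlemanWeight c K q x ^ 2 := by
  have hpow : x ^ (r + 2 * (p - q)) ≤ x₀ ^ (r + 2 * (p - q)) :=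
    Real.rpow_le_rpow_of_nonpos hx₀ hx (by linarith)
  rw [rpow_mul_carlemanWeight_sq hK (hx₀.trans_le hx)]
  gcongr

theorem abs_div_sub_le (hx₀ : 0 < x₀) (hx : x₀ ≤ x) : |p / x - c| ≤ |p| / x₀ + |c| :=
  calc |p / x - c| ≤ |p / x| + |c| := abs_sub _ _
    _ = |p| / x + |c| := by rw [abs_div, abs_of_pos (hx₀.trans_le hx)]
    _ ≤ |p| / x₀ + |c| := by gcongr

theorem abs_deriv_carlemanWeight_comp_sq_le {τ : ℝ → ℝ} {τ' t C₃ : ℝ} (hK : 0 < K)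
    (hx₀ : 0 < x₀) (hpq : 2 * p + r ≤ 2 * q) (hτ : HasDerivAt τ τ' t) (hτlb : x₀ ≤ τ t)
    (hτgrow : |τ'| ≤ C₃ * τ t ^ r) :
    |deriv (fun u => carlemanWeight c K p (τ u) ^ 2) t| ≤
      2 * (|p| / x₀ + |c|) * C₃ * (K ^ (2 * (p - q)) * x₀ ^ (r + 2 * (p - q))) *
        carlemanWeight c K q (τ t) ^ 2 := by
  have hτt : 0 < τ t := hx₀.trans_le hτlb
  have hC₃ : 0 ≤ C₃ :=
    nonneg_of_mul_nonneg_left ((abs_nonneg τ').trans hτgrow) (Real.rpow_pos_of_pos hτt r)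
  rw [(hasDerivAt_carlemanWeight_comp_sq hK.ne' hτt.ne' hτ).deriv]
  calc |2 * (p / τ t - c) * τ' * carlemanWeight c K p (τ t) ^ 2|
      = 2 * |p / τ t - c| * |τ'| * carlemanWeight c K p (τ t) ^ 2 := by
        rw [abs_mul, abs_mul, abs_mul, abs_two, abs_sq]
    _ ≤ 2 * (|p| / x₀ + |c|) * (C₃ * τ t ^ r) * carlemanWeight c K p (τ t) ^ 2 := by
        gcongr
        exact abs_div_sub_le hx₀ hτlb
    _ = 2 * (|p| / x₀ + |c|) * C₃ * (τ t ^ r * carlemanWeight c K p (τ t) ^ 2) := by ring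
    _ ≤ 2 * (|p| / x₀ + |c|) * C₃ *
          (K ^ (2 * (p - q)) * x₀ ^ (r + 2 * (p - q)) * carlemanWeight c K q (τ t) ^ 2) :=
        mul_le_mul_of_nonneg_left (rpow_mul_carlemanWeight_sq_le hK hx₀ hτlb hpq) (by positivity)
    _ = _ := by ring

theorem rho1_sq_derivative_bound_general {τ₀ C₃ : ℝ} {I : Set ℝ} {τ τ' : ℝ → ℝ} (hK : 0 < K)
    (hτ₀ : 0 < τ₀) (hpq : 2 * p + r ≤ 2 * q) (hτder : ∀ t ∈ I, HasDerivAt τ (τ' t) t)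
    (hτlb : ∀ t ∈ I, τ₀ ≤ τ t) (hτgrow : ∀ t ∈ I, |τ' t| ≤ C₃ * τ t ^ r) :
    ∃ C > (0 : ℝ), ∀ t ∈ I,
      |deriv (fun u => carlemanWeight c K p (τ u) ^ 2) t| ≤
        C * carlemanWeight c K q (τ t) ^ 2 := by
  -- The constant of the pointwise bound may be `0`, for instance when `c = p = 0`.
  refine ⟨max (2 * (|p| / τ₀ + |c|) * C₃ * (K ^ (2 * (p - q)) * τ₀ ^ (r + 2 * (p - q)))) 1,
    lt_max_of_lt_right one_pos, fun t ht => ?_⟩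
  refine (abs_deriv_carlemanWeight_comp_sq_le hK hτ₀ hpq (hτder t ht) (hτlb t ht)
    (hτgrow t ht)).trans ?_
  gcongr
  exact le_max_left _ _

end CarlemanWeight

/-- If `τ ≥ τ₀ > 0` and `|τ'| ≤ C₃ τ^{5/4}` on the interval `I`, then the weights
`ρ₁ = e^{−sA*}(ζ*)^{−3/2}` and `ρ̂ = e^{−sA*}(ζ*)^{−3/4}` built from `A* = K₁τ`
(`K₁ < 0`) and `ζ* = K₂τ` (`K₂ > 0`) satisfy `|(ρ₁²)'| ≤ C ρ̂²` on `I` for some `C > 0`. -/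
theorem rho1_sq_derivative_bound
    (s K₁ K₂ τ₀ C₃ : ℝ) (hs : 0 < s) (hK₁ : K₁ < 0) (hK₂ : 0 < K₂)
    (hτ₀ : 0 < τ₀) (hC₃ : 0 < C₃)
    (I : Set ℝ) (τ τ' : ℝ → ℝ)
    (hτder : ∀ t ∈ I, HasDerivAt τ (τ' t) t)
    (hτlb : ∀ t ∈ I, τ₀ ≤ τ t)
    (hτgrow : ∀ t ∈ I, |τ' t| ≤ C₃ * τ t ^ ((5:ℝ)/4)) :
    ∃ C > (0:ℝ), ∀ t ∈ I,
      |deriv (fun u => rho1 s K₁ K₂ τ u ^ 2) t| ≤ C * rhoHat s K₁ K₂ τ t ^ 2 := by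
  simpa only [rho1_eq_carlemanWeight, rhoHat_eq_carlemanWeight] using
    rho1_sq_derivative_bound_general hK₂ hτ₀ (by norm_num) hτder hτlb hτgrow
end

section
/- Let T > 0, Q = (0,1)×(0,T), and let a : [0,1] → ℝ be continuous, nonnegative, and continuously differentiable on (0,1]. Let b : [0,T] → ℝ be continuous with 0 < m ≤ b(t) ≤ M, and let c₁, d₁ : Q → ℝ be measurable with |c₁|, |d₁| ≤ Λ. Fix constants s > 0, K₁ < 0 < K₂, τ₀ > 0, ζ₀ ≥ 1, C₃ > 0 and a differentiable function τ : [0,T) → ℝ with τ ≥ τ₀ and |τ'| ≤ C₃τ^{5/4}; set A* = K₁τ, ζ* = K₂τ, ζ̂ = ζ*/ζ₀, ρ₀ = e^{−sA*}, ρ₁ = e^{−sA*}(ζ*)^{−3/2}, ρ̂ = e^{−sA*}(ζ*)^{−3/4}, ρ₂ = e^{−3sA*/2}(ζ̂)^{−1}. Let ω₁ ⊂ (0,1) be open, and let z : [0,1]×[0,T] → ℝ be continuous, with z_x, (a z_x)_x and z_t existing and continuous on (0,1)×(0,T), satisfying z_t − b(t)(a(x)z_x)_x − d₁(x,t)√(a(x))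 z_x + c₁(x,t)z = h̃·1_{ω₁} + G pointwise in (0,1)×(0,T), z(0,t) = z(1,t) = 0 for all t, and z(x,0) = z₀(x), where z₀ is differentiable on (0,1) with ∫₀¹ a(x) z₀'(x)² dx < ∞; assume all the integrals below are finite. Then there exists a constant C > 0, depending only on T, m, M, Λ and the weight constants (and not on z, h̃, G, z₀), such that sup_{t∈[0,T)} ρ₁(t)² ∫₀¹ a(x) z_x(x,t)² dx + ∫₀ᵀ∫₀¹ ρ₁² ( z_t² + ((a(x)z_x)_x)² ) dx dt ≤ C ( ∫₀ᵀ∫₀¹ ρ₀² z² dx dt + ∫₀ᵀ∫_{ω₁} ρ₁² h̃² dx dt + ∫₀ᵀ∫₀¹ ρ₂² G² dx dt + ∫₀¹ z₀² dx + ∫₀¹ a(x) z₀'(x)² dx ). -/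
open MeasureTheory Set

/-- The Carleman weight `ρ₀ = e^{−sA*}` with `A* = K₁τ`. -/
noncomputable def rho0 (s K₁ : ℝ) (τ : ℝ → ℝ) (t : ℝ) : ℝ :=
  Real.exp (-(s * (K₁ * τ t)))

/-- The Carleman weight `ρ₂ = e^{−3sA*/2}(ζ̂)⁻¹`, `ζ̂ = ζ*/ζ₀`. -/
noncomputable def rho2 (s K₁ K₂ ζ₀ : ℝ) (τ : ℝ → ℝ) (t : ℝ) : ℝ :=
  Real.exp (-(3 * s * (K₁ * τ t) / 2)) * (K₂ * τ t / ζ₀)⁻¹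

/-! With `ρ = ρ₁`, the function `y = ρ z` solves the same equation with right-hand side
`ρ (f + g) + ρ' z`, so everything reduces to the energy inequality
`∫ a y_x²(S) ≤ ∫ a y_x²(0) - 2 ∫∫ (a y_x)_x y_t` for an unweighted `y`. Since `z_x` need not be
differentiable in time, the energy cannot be differentiated directly. It is convex, with gradient
`-2 (a y_x)_x`, so its increments are bounded through backward difference quotients of `y` in time;
these converge weakly in `L²` to `y_t`, because averaging does not increase the `L²` norm, and the
energy is lower semicontinuous. Inserting the equation turns the cross term into squares of `y_t`
and `(a y_x)_x`, and the identity `∫∫ a y_x² = -∫∫ (a y_x)_x y` absorbs the first order term. -/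

open Filter Topology

section MeasureTheoreticPreliminaries

variable {α : Type*} [MeasurableSpace α] {μ : Measure α}

lemma integral_le_of_frequently_integral_le {f : ℕ → α → ℝ} {g : α → ℝ} {K : ℝ}
    (hf : ∀ n, Integrable (f n) μ) (hf_nonneg : ∀ n, 0 ≤ᵐ[μ] f n)
    (hfg : ∀ᵐ x ∂μ, Tendsto (fun n ↦ f n x) atTop (𝓝 (g x)))
    (hK : ∃ᶠ n in atTop, ∫ x, f n x ∂μ ≤ K) : ∫ x, g x ∂μ ≤ K := by
  obtain ⟨n₀, hn₀⟩ := hK.exists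
  have hK_nonneg : 0 ≤ K := (integral_nonneg_of_ae (hf_nonneg n₀)).trans hn₀
  have hg_meas : AEStronglyMeasurable g μ :=
    aestronglyMeasurable_of_tendsto_ae atTop (fun n ↦ (hf n).1) hfg
  have hg_nonneg : 0 ≤ᵐ[μ] g := by
    filter_upwards [hfg, ae_all_iff.2 hf_nonneg] with x hx hx_nonneg
    exact ge_of_tendsto' hx hx_nonneg
  rw [integral_eq_lintegral_of_nonneg_ae hg_nonneg hg_meas]
  refine ENNReal.toReal_le_of_le_ofReal hK_nonneg ?_
  calc ∫⁻ x, ENNReal.ofReal (g x) ∂μ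
      = ∫⁻ x, liminf (fun n ↦ ENNReal.ofReal (f n x)) atTop ∂μ := by
        refine lintegral_congr_ae ?_
        filter_upwards [hfg] with x hx
        exact ((ENNReal.continuous_ofReal.tendsto _).comp hx).liminf_eq.symm
    _ ≤ liminf (fun n ↦ ∫⁻ x, ENNReal.ofReal (f n x) ∂μ) atTop :=
        lintegral_liminf_le' fun n ↦ (hf n).1.aemeasurable.ennreal_ofReal
    _ ≤ ENNReal.ofReal K := by
        refine liminf_le_of_frequently_le' (hK.mono fun n hn ↦ ?_)
        rw [← ofReal_integral_eq_lintegral_ofReal (hf n) (hf_nonneg n)]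
        exact ENNReal.ofReal_le_ofReal hn

lemma integral_add_sq_of_memLp {f g : α → ℝ} (hf : MemLp f 2 μ) (hg : MemLp g 2 μ) :
    ∫ x, (f x + g x) ^ 2 ∂μ =
      ∫ x, f x ^ 2 ∂μ + 2 * ∫ x, f x * g x ∂μ + ∫ x, g x ^ 2 ∂μ := by
  have hfg : Integrable (fun x ↦ f x * g x) μ := hf.integrable_mul hg
  rw [← integral_const_mul, ← integral_add hf.integrable_sq (hfg.const_mul 2),
    ← integral_add (hf.integrable_sq.fun_add (hfg.const_mul 2)) hg.integrable_sq]
  exact integral_congr_ae (ae_of_all _ fun x ↦ by ring)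

-- Fatou's lemma for `(w + f n) ^ 2`: the bound on the squares leaves only the cross term.
lemma eventually_lt_integral_mul_of_integral_sq_le {f : ℕ → α → ℝ} {g w : α → ℝ} {c : ℝ}
    (hw : MemLp w 2 μ) (hf : ∀ n, MemLp (f n) 2 μ) (hg : MemLp g 2 μ)
    (hfg : ∀ᵐ x ∂μ, Tendsto (fun n ↦ f n x) atTop (𝓝 (g x)))
    (hle : ∀ n, ∫ x, f n x ^ 2 ∂μ ≤ ∫ x, g x ^ 2 ∂μ) (hc : c < ∫ x, w x * g x ∂μ) :
    ∀ᶠ n in atTop, c < ∫ x, w x * f n x ∂μ := by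
  by_contra hfreq
  have hfatou : ∫ x, (w x + g x) ^ 2 ∂μ ≤ ∫ x, w x ^ 2 ∂μ + 2 * c + ∫ x, g x ^ 2 ∂μ := by
    refine integral_le_of_frequently_integral_le (f := fun n x ↦ (w x + f n x) ^ 2)
      (fun n ↦ (hw.add (hf n)).integrable_sq) (fun n ↦ ae_of_all _ fun x ↦ sq_nonneg _) ?_
      ((not_eventually.1 hfreq).mono fun n hn ↦ ?_)
    · filter_upwards [hfg] with x hx
      exact (hx.const_add _).pow 2
    · rw [integral_add_sq_of_memLp hw (hf n)]
      linarith [hle n, not_lt.1 hn]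
  rw [integral_add_sq_of_memLp hw hg] at hfatou
  linarith

lemma tendsto_integral_mul_of_integral_sq_le {f : ℕ → α → ℝ} {g w : α → ℝ}
    (hw : MemLp w 2 μ) (hf : ∀ n, MemLp (f n) 2 μ) (hg : MemLp g 2 μ)
    (hfg : ∀ᵐ x ∂μ, Tendsto (fun n ↦ f n x) atTop (𝓝 (g x)))
    (hle : ∀ n, ∫ x, f n x ^ 2 ∂μ ≤ ∫ x, g x ^ 2 ∂μ) :
    Tendsto (fun n ↦ ∫ x, w x * f n x ∂μ) atTop (𝓝 (∫ x, w x * g x ∂μ)) := by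
  refine tendsto_order.2 ⟨fun c hc ↦ eventually_lt_integral_mul_of_integral_sq_le hw hf hg hfg hle
    hc, fun c hc ↦ ?_⟩
  have hneg := eventually_lt_integral_mul_of_integral_sq_le (c := -c) hw.neg hf hg hfg hle
    (by simpa only [Pi.neg_apply, neg_mul, integral_neg, neg_lt_neg_iff] using hc)
  simpa only [Pi.neg_apply, neg_mul, integral_neg, neg_lt_neg_iff] using hneg

lemma integrable_mul_mul_of_sq {c f g : α → ℝ} (hc : 0 ≤ᵐ[μ] c)
    (hcfg : AEStronglyMeasurable (fun x ↦ c x * (f x * g x)) μ)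
    (hf : Integrable (fun x ↦ c x * f x ^ 2) μ) (hg : Integrable (fun x ↦ c x * g x ^ 2) μ) :
    Integrable (fun x ↦ c x * (f x * g x)) μ := by
  refine (hf.add hg).mono' hcfg ?_
  filter_upwards [hc] with x hx
  have hx : 0 ≤ c x := hx
  rw [Real.norm_eq_abs, abs_mul, abs_of_nonneg hx, Pi.add_apply, ← mul_add]
  refine mul_le_mul_of_nonneg_left ?_ hx
  rw [abs_le]
  constructor <;> nlinarith [sq_nonneg (f x + g x), sq_nonneg (f x - g x)]

end MeasureTheoreticPreliminaries

section LineDerivMeasurability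

lemma measurable_indicator_of_hasLineDerivAt {E : Type*} [NormedAddCommGroup E] [NormedSpace ℝ E]
    [MeasurableSpace E] [BorelSpace E] {Q : Set E} (hQ : IsOpen Q) {f f' : E → ℝ} {v : E}
    (hf : Measurable (Q.indicator f)) (hf' : ∀ q ∈ Q, HasLineDerivAt ℝ f (f' q) q v) :
    Measurable (Q.indicator f') := by
  set h : ℕ → ℝ := fun n ↦ 1 / ((n : ℝ) + 1)
  have hh : Tendsto h atTop (𝓝 0) := tendsto_one_div_add_atTop_nhds_zero_nat
  have hh_ne : ∀ n, h n ≠ 0 := fun n ↦ Nat.one_div_pos_of_nat.ne'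
  refine measurable_of_tendsto_metrizable (f := fun n ↦ Q.indicator fun q ↦
    (h n)⁻¹ * (Q.indicator f (q + h n • v) - Q.indicator f q)) (fun n ↦ ?_) ?_
  · exact (((hf.comp (measurable_add_const (h n • v))).sub hf).const_mul _).indicator
      hQ.measurableSet
  refine tendsto_pi_nhds.2 fun q ↦ ?_
  by_cases hq : q ∈ Q
  swap
  · simp only [indicator_of_notMem hq, tendsto_const_nhds]
  have hshift : Tendsto (fun n ↦ q + h n • v) atTop (𝓝 q) := by
    simpa only [zero_smul, add_zero] using (hh.smul_const v).const_add q
  have hslope : Tendsto (fun n ↦ (h n)⁻¹ • (f (q + h n • v) - f q)) atTop (𝓝 (f' q)) :=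
    (hf' q hq).tendsto_slope_zero.comp
      (tendsto_nhdsWithin_iff.2 ⟨hh, Eventually.of_forall hh_ne⟩)
  simp only [indicator_of_mem hq]
  refine hslope.congr' ?_
  filter_upwards [hshift.eventually (hQ.mem_nhds hq)] with n hn
  rw [indicator_of_mem hn, smul_eq_mul]

variable {f : ℝ → ℝ → ℝ} {f' x t : ℝ}

lemma hasLineDerivAt_fst_of_hasDerivAt (hf : HasDerivAt (fun y ↦ f y t) f' x) :
    HasLineDerivAt ℝ (fun p : ℝ × ℝ ↦ f p.1 p.2) f' (x, t) (1, 0) := by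
  have : HasDerivAt (fun h ↦ f (x + h) t) f' 0 :=
    HasDerivAt.comp_const_add x 0 (by rwa [add_zero])
  simpa [HasLineDerivAt] using this

lemma hasLineDerivAt_snd_of_hasDerivAt (hf : HasDerivAt (fun u ↦ f x u) f' t) :
    HasLineDerivAt ℝ (fun p : ℝ × ℝ ↦ f p.1 p.2) f' (x, t) (0, 1) := by
  have : HasDerivAt (fun h ↦ f x (t + h)) f' 0 :=
    HasDerivAt.comp_const_add t 0 (by rwa [add_zero])
  simpa [HasLineDerivAt] using this

end LineDerivMeasurability

section OneDimensionalCalculus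

lemma sq_setIntegral_Ioo_le {f : ℝ → ℝ} {l r : ℝ} (hlr : l ≤ r)
    (hf : MemLp f 2 (volume.restrict (Ioo l r))) :
    (∫ x in Ioo l r, f x) ^ 2 ≤ (r - l) * ∫ x in Ioo l r, f x ^ 2 := by
  rcases hlr.eq_or_lt with rfl | hlr
  · simp
  have hvol : volume (Ioo l r) ≠ 0 := by simpa using hlr
  have hjensen := (Even.convexOn_pow even_two).map_set_average_le (μ := volume)
    (continuousOn_pow 2) isClosed_univ hvol measure_Ioo_lt_top.ne (by simp)
    (hf.integrable one_le_two) hf.integrable_sq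
  rw [setAverage_eq, setAverage_eq, Real.volume_real_Ioo_of_le hlr.le, smul_eq_mul,
    smul_eq_mul, mul_pow] at hjensen
  have hlen : 0 < r - l := sub_pos.2 hlr
  calc (∫ x in Ioo l r, f x) ^ 2
      = (r - l) ^ 2 * ((r - l)⁻¹ ^ 2 * (∫ x in Ioo l r, f x) ^ 2) := by field_simp [hlen.ne']
    _ ≤ (r - l) ^ 2 * ((r - l)⁻¹ * ∫ x in Ioo l r, f x ^ 2) := by gcongr
    _ = (r - l) * ∫ x in Ioo l r, f x ^ 2 := by field_simp

lemma aestronglyMeasurable_of_hasDerivAt_off_countable {y y' : ℝ → ℝ} {s N : Set ℝ}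
    (hs : MeasurableSet s) (hN : N.Countable) (hy : ∀ x ∈ s \ N, HasDerivAt y (y' x) x) :
    AEStronglyMeasurable y' (volume.restrict s) := by
  refine (measurable_deriv y).aestronglyMeasurable.congr ?_
  filter_upwards [ae_restrict_mem hs, ae_restrict_of_ae (hN.ae_notMem volume)] with x hx hxN
  exact (hy x ⟨hx, hxN⟩).deriv

lemma mul_sub_sq_le_mul_integral {a y y' : ℝ → ℝ} {N : Set ℝ} {s t c : ℝ} (hst : s ≤ t)
    (hN : N.Countable) (hy : ContinuousOn y (Icc s t))
    (hy' : ∀ x ∈ Ioo s t \ N, HasDerivAt y (y' x) x) (hc : 0 ≤ c) (hca : ∀ x ∈ Ioo s t, c ≤ a x)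
    (hint : IntegrableOn (fun x ↦ a x * y' x ^ 2) (Ioo s t)) :
    c * (y t - y s) ^ 2 ≤ (t - s) * ∫ x in Ioo s t, a x * y' x ^ 2 := by
  have hst' : 0 ≤ t - s := sub_nonneg.2 hst
  rcases hc.eq_or_lt with rfl | hc
  · rw [zero_mul]
    exact mul_nonneg hst' (setIntegral_nonneg measurableSet_Ioo fun x hx ↦
      mul_nonneg (hca x hx) (sq_nonneg _))
  have hle : ∀ x ∈ Ioo s t, c * y' x ^ 2 ≤ a x * y' x ^ 2 := fun x hx ↦
    mul_le_mul_of_nonneg_right (hca x hx) (sq_nonneg _)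
  have hmeas := aestronglyMeasurable_of_hasDerivAt_off_countable measurableSet_Ioo hN hy'
  have hsq : IntegrableOn (fun x ↦ y' x ^ 2) (Ioo s t) := by
    refine (hint.const_mul c⁻¹).mono' (hmeas.pow 2) ?_
    filter_upwards [ae_restrict_mem measurableSet_Ioo] with x hx
    rw [Real.norm_of_nonneg (sq_nonneg _), le_inv_mul_iff₀ hc]
    exact hle x hx
  have hmemLp : MemLp y' 2 (volume.restrict (Ioo s t)) :=
    (memLp_two_iff_integrable_sq hmeas).2 hsq
  have hftc : ∫ x in Ioo s t, y' x = y t - y s := by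
    rw [← integral_Ioc_eq_integral_Ioo, ← intervalIntegral.integral_of_le hst]
    refine MeasureTheory.integral_eq_of_hasDerivAt_off_countable_of_le y y' hst hN hy hy' ?_
    rw [intervalIntegrable_iff_integrableOn_Ioo_of_le hst]
    exact hmemLp.integrable one_le_two
  calc c * (y t - y s) ^ 2
      ≤ c * ((t - s) * ∫ x in Ioo s t, y' x ^ 2) := by
        rw [← hftc]
        gcongr
        exact sq_setIntegral_Ioo_le hst hmemLp
    _ = (t - s) * ∫ x in Ioo s t, c * y' x ^ 2 := by rw [integral_const_mul]; ring
    _ ≤ (t - s) * ∫ x in Ioo s t, a x * y' x ^ 2 :=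
        mul_le_mul_of_nonneg_left
          (setIntegral_mono_on (hsq.const_mul c) hint measurableSet_Ioo hle) hst'

section Shift

variable {f : ℝ → ℝ} {l r h : ℝ}

lemma intervalIntegrable_shift (hh : h ∈ Icc 0 (r - l)) (hf : IntervalIntegrable f volume l r) :
    IntervalIntegrable (fun x ↦ f (x + h)) volume l (r - h) := by
  have hsub : uIcc (l + h) r ⊆ uIcc l r := uIcc_subset_uIcc
    (mem_uIcc_of_le (by linarith [hh.1]) (by linarith [hh.2])) right_mem_uIcc
  simpa only [add_sub_cancel_right] using (hf.mono_set hsub).comp_add_right h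

lemma intervalIntegral_shift_sub (hh : h ∈ Icc 0 (r - l)) (hf : IntervalIntegrable f volume l r) :
    ∫ x in l..r - h, (f (x + h) - f x) = (∫ x in r - h..r, f x) - ∫ x in l..l + h, f x := by
  have hmem_left : l + h ∈ uIcc l r := mem_uIcc_of_le (by linarith [hh.1]) (by linarith [hh.2])
  have hmem_right : r - h ∈ uIcc l r := mem_uIcc_of_le (by linarith [hh.2]) (by linarith [hh.1])
  have hf_left := hf.mono_set (uIcc_subset_uIcc left_mem_uIcc hmem_right)
  rw [intervalIntegral.integral_sub (intervalIntegrable_shift hh hf) hf_left,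
    intervalIntegral.integral_comp_add_right, sub_add_cancel]
  exact intervalIntegral.integral_interval_sub_interval_comm'
    (hf.mono_set (uIcc_subset_uIcc hmem_left right_mem_uIcc)) hf_left
    (hf.mono_set (uIcc_subset_uIcc hmem_left left_mem_uIcc))

end Shift

lemma integral_shift_sub_le_of_monotoneOn {H : ℝ → ℝ} {l r h : ℝ} (hh : h ∈ Icc 0 (r - l))
    (hH : MonotoneOn H (Icc l r)) :
    ∫ x in l..r - h, (H (x + h) - H x) ≤ h * (H r - H l) := by
  obtain ⟨h_nonneg, h_le⟩ := hh
  have hlr : l ≤ r := by linarith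
  have hint : ∀ {p q}, p ∈ Icc l r → q ∈ Icc l r → IntervalIntegrable H volume p q :=
    fun hp hq ↦ (hH.mono (by rw [← uIcc_of_le hlr] at *; exact uIcc_subset_uIcc hp hq)
      ).intervalIntegrable
  have hl : l ∈ Icc l r := left_mem_Icc.2 hlr
  have hr : r ∈ Icc l r := right_mem_Icc.2 hlr
  have hupper : ∫ x in r - h..r, H x ≤ ∫ _x in r - h..r, H r :=
    intervalIntegral.integral_mono_on (by linarith) (hint ⟨by linarith, by linarith⟩ hr)
      intervalIntegrable_const fun x hx ↦ hH ⟨by linarith [hx.1], hx.2⟩ hr hx.2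
  have hlower : ∫ _x in l..l + h, H l ≤ ∫ x in l..l + h, H x :=
    intervalIntegral.integral_mono_on (by linarith) intervalIntegrable_const
      (hint hl ⟨by linarith, by linarith⟩) fun x hx ↦ hH hl ⟨hx.1, by linarith [hx.2]⟩ hx.1
  rw [intervalIntegral_shift_sub ⟨h_nonneg, h_le⟩ (hint hl hr)]
  simp only [intervalIntegral.integral_const, smul_eq_mul] at hupper hlower
  linarith

lemma integral_setIntegral_shift_le {f : ℝ → ℝ} {l r h : ℝ} (hh : h ∈ Icc 0 (r - l))
    (hf : IntegrableOn f (Ioo l r)) (hf_nonneg : ∀ x ∈ Ioo l r, 0 ≤ f x) :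
    IntegrableOn (fun x ↦ ∫ u in Ioo x (x + h), f u) (Ioo l (r - h)) ∧
      ∫ x in Ioo l (r - h), ∫ u in Ioo x (x + h), f u ≤ h * ∫ x in Ioo l r, f x := by
  obtain ⟨h_nonneg, h_le⟩ := id hh
  have hlr : l ≤ r := by linarith
  set H : ℝ → ℝ := fun x ↦ ∫ u in l..x, f u
  have hf_int : ∀ {q}, l ≤ q → q ≤ r → IntervalIntegrable f volume l q := fun hl hr ↦
    (intervalIntegrable_iff_integrableOn_Ioo_of_le hl).2 (hf.mono_set (Ioo_subset_Ioo_right hr))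
  have hH_sub : ∀ {p q}, l ≤ p → p ≤ q → q ≤ r → H q - H p = ∫ x in Ioo p q, f x := by
    intro p q hp hpq hq
    rw [intervalIntegral.integral_interval_sub_left (hf_int (hp.trans hpq) hq)
      (hf_int hp (hpq.trans hq)), intervalIntegral.integral_of_le hpq, integral_Ioc_eq_integral_Ioo]
  have hH_mono : MonotoneOn H (Icc l r) := fun p hp q hq hpq ↦ by
    rw [← sub_nonneg, hH_sub hp.1 hpq hq.2]
    exact setIntegral_nonneg measurableSet_Ioo fun x hx ↦
      hf_nonneg x ⟨hp.1.trans_lt hx.1, hx.2.trans_le hq.2⟩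
  have hH_int : IntervalIntegrable H volume l r :=
    (hH_mono.mono (uIcc_of_le hlr).subset).intervalIntegrable
  have hH_shift : IntegrableOn (fun x ↦ H (x + h) - H x) (Ioo l (r - h)) := by
    rw [← intervalIntegrable_iff_integrableOn_Ioo_of_le (by linarith)]
    exact (intervalIntegrable_shift hh hH_int).sub (hH_int.mono_set
      (uIcc_subset_uIcc left_mem_uIcc (mem_uIcc_of_le (by linarith) (by linarith))))
  have hcongr : ∀ x ∈ Ioo l (r - h), H (x + h) - H x = ∫ u in Ioo x (x + h), f u :=
    fun x hx ↦ hH_sub hx.1.le (by linarith) (by linarith [hx.2])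
  refine ⟨hH_shift.congr_fun hcongr measurableSet_Ioo, ?_⟩
  rw [← setIntegral_congr_fun measurableSet_Ioo hcongr, ← hH_sub le_rfl hlr le_rfl,
    ← integral_Ioc_eq_integral_Ioo, ← intervalIntegral.integral_of_le (by linarith)]
  exact integral_shift_sub_le_of_monotoneOn hh hH_mono

lemma integral_mul_shift_sub_sq_le {a c y y' : ℝ → ℝ} {N : Set ℝ} {l r h : ℝ}
    (hh : h ∈ Icc 0 (r - l)) (hN : N.Countable) (hy : ContinuousOn y (Icc l r))
    (hy' : ∀ x ∈ Ioo l r \ N, HasDerivAt y (y' x) x) (hc : ∀ x ∈ Ioo l (r - h), 0 ≤ c x)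
    (hca : ∀ x ∈ Ioo l (r - h), ∀ u ∈ Ioo x (x + h), c x ≤ a u) (ha : ∀ x ∈ Ioo l r, 0 ≤ a x)
    (hint : IntegrableOn (fun x ↦ a x * y' x ^ 2) (Ioo l r)) :
    ∫ x in Ioo l (r - h), c x * (y (x + h) - y x) ^ 2 ≤
      h ^ 2 * ∫ x in Ioo l r, a x * y' x ^ 2 := by
  obtain ⟨hshift_int, hshift_le⟩ := integral_setIntegral_shift_le hh hint fun x hx ↦
    mul_nonneg (ha x hx) (sq_nonneg _)
  have hpointwise : ∀ x ∈ Ioo l (r - h),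
      c x * (y (x + h) - y x) ^ 2 ≤ h * ∫ u in Ioo x (x + h), a u * y' u ^ 2 := fun x hx ↦ by
    have hsub : Ioo x (x + h) ⊆ Ioo l r := Ioo_subset_Ioo hx.1.le (by linarith [hx.2])
    simpa only [add_sub_cancel_left] using
      mul_sub_sq_le_mul_integral (le_add_of_nonneg_right hh.1) hN
        (hy.mono (Icc_subset_Icc hx.1.le (by linarith [hx.2])))
        (fun u hu ↦ hy' u ⟨hsub hu.1, hu.2⟩) (hc x hx) (hca x hx) (hint.mono_set hsub)
  calc ∫ x in Ioo l (r - h), c x * (y (x + h) - y x) ^ 2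
      ≤ ∫ x in Ioo l (r - h), h * ∫ u in Ioo x (x + h), a u * y' u ^ 2 :=
        integral_mono_of_nonneg
          (ae_restrict_of_forall_mem measurableSet_Ioo fun x hx ↦
            mul_nonneg (hc x hx) (sq_nonneg _)) (hshift_int.const_mul h)
          (ae_restrict_of_forall_mem measurableSet_Ioo hpointwise)
    _ = h * ∫ x in Ioo l (r - h), ∫ u in Ioo x (x + h), a u * y' u ^ 2 := integral_const_mul _ _
    _ ≤ h * (h * ∫ x in Ioo l r, a x * y' x ^ 2) := mul_le_mul_of_nonneg_left hshift_le hh.1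
    _ = h ^ 2 * ∫ x in Ioo l r, a x * y' x ^ 2 := by ring

section LowerSemicontinuity

variable {a u u' : ℝ → ℝ} {y y' : ℕ → ℝ → ℝ} {l r K : ℝ}

lemma integrableOn_mul_slope_sq {c y : ℝ → ℝ} {h : ℝ} (hh : 0 ≤ h)
    (hc : ContinuousOn c (Icc l (r - h))) (hy : ContinuousOn y (Icc l r)) :
    IntegrableOn (fun x ↦ c x * (h⁻¹ * (y (x + h) - y x)) ^ 2) (Ioo l (r - h)) := by
  refine ContinuousOn.integrableOn_Icc ?_ |>.mono_set Ioo_subset_Icc_self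
  have hy_shift : ContinuousOn (fun x ↦ y (x + h)) (Icc l (r - h)) :=
    hy.comp (by fun_prop) fun x hx ↦ ⟨by linarith [hx.1], by linarith [hx.2]⟩
  exact hc.mul ((continuousOn_const.mul
    (hy_shift.sub (hy.mono (Icc_subset_Icc_right (by linarith))))).pow 2)

lemma integral_mul_slope_sq_le_of_frequently {c : ℝ → ℝ} {h : ℝ} (hh : h ∈ Ioc 0 (r - l))
    (hc_cont : ContinuousOn c (Icc l (r - h))) (hc : ∀ x ∈ Ioo l (r - h), 0 ≤ c x)
    (hca : ∀ x ∈ Ioo l (r - h), ∀ v ∈ Ioo x (x + h), c x ≤ a v) (ha : ∀ x ∈ Ioo l r, 0 ≤ a x)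
    (hy : ∀ n, ContinuousOn (y n) (Icc l r))
    (hy' : ∀ n, ∀ x ∈ Ioo l r, HasDerivAt (y n) (y' n x) x)
    (hint : ∀ n, IntegrableOn (fun x ↦ a x * y' n x ^ 2) (Ioo l r))
    (hyu : ∀ x ∈ Icc l r, Tendsto (fun n ↦ y n x) atTop (𝓝 (u x)))
    (hK : ∃ᶠ n in atTop, ∫ x in Ioo l r, a x * y' n x ^ 2 ≤ K) :
    ∫ x in Ioo l (r - h), c x * (h⁻¹ * (u (x + h) - u x)) ^ 2 ≤ K := by
  have hh' : h ∈ Icc 0 (r - l) := Ioc_subset_Icc_self hh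
  refine integral_le_of_frequently_integral_le
    (f := fun n x ↦ c x * (h⁻¹ * (y n (x + h) - y n x)) ^ 2)
    (fun n ↦ integrableOn_mul_slope_sq hh'.1 hc_cont (hy n))
    (fun n ↦ ae_restrict_of_forall_mem measurableSet_Ioo fun x hx ↦
      mul_nonneg (hc x hx) (sq_nonneg _))
    (ae_restrict_of_forall_mem measurableSet_Ioo fun x hx ↦ ?_) (hK.mono fun n hn ↦ ?_)
  · have hlim := hyu x ⟨hx.1.le, by linarith [hx.2, hh'.1]⟩
    have hlim_shift := hyu (x + h) ⟨by linarith [hx.1, hh'.1], by linarith [hx.2]⟩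
    exact (((hlim_shift.sub hlim).const_mul _).pow 2).const_mul _
  · have hslope := integral_mul_shift_sub_sq_le hh' countable_empty (hy n)
      (fun x hx ↦ hy' n x hx.1) hc hca ha (hint n)
    calc ∫ x in Ioo l (r - h), c x * (h⁻¹ * (y n (x + h) - y n x)) ^ 2
        = (h ^ 2)⁻¹ * ∫ x in Ioo l (r - h), c x * (y n (x + h) - y n x) ^ 2 := by
          rw [← integral_const_mul]
          exact integral_congr_ae (ae_of_all _ fun x ↦ by ring)
      _ ≤ (h ^ 2)⁻¹ * (h ^ 2 * ∫ x in Ioo l r, a x * y' n x ^ 2) := by gcongr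
      _ = ∫ x in Ioo l r, a x * y' n x ^ 2 := inv_mul_cancel_left₀ (pow_ne_zero 2 hh.1.ne') _
      _ ≤ K := hn

lemma exists_seq_forall_sub_le (hlr : l < r) (ha : ContinuousOn a (Icc l r)) :
    ∃ h ε : ℕ → ℝ, (∀ k, h k ∈ Ioc 0 (r - l)) ∧ Tendsto h atTop (𝓝 0) ∧ Tendsto ε atTop (𝓝 0) ∧
      ∀ k, ∀ x ∈ Icc l r, ∀ v ∈ Icc l r, |x - v| < h k → a x - ε k ≤ a v := by
  set ε : ℕ → ℝ := fun k ↦ 1 / ((k : ℝ) + 1)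
  have hε_pos : ∀ k, 0 < ε k := fun k ↦ Nat.one_div_pos_of_nat
  have hε : Tendsto ε atTop (𝓝 0) := tendsto_one_div_add_atTop_nhds_zero_nat
  choose δ hδ_pos hδ using fun k ↦ Metric.uniformContinuousOn_iff.1
    (isCompact_Icc.uniformContinuousOn_of_continuous ha) (ε k) (hε_pos k)
  have h_pos : ∀ k, 0 < min (min (δ k) (ε k)) (r - l) := fun k ↦
    lt_min (lt_min (hδ_pos k) (hε_pos k)) (sub_pos.2 hlr)
  refine ⟨fun k ↦ min (min (δ k) (ε k)) (r - l), ε, fun k ↦ ⟨h_pos k, min_le_right _ _⟩,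
    squeeze_zero (fun k ↦ (h_pos k).le) (fun k ↦ (min_le_left _ _).trans (min_le_right _ _)) hε,
    hε, fun k x hx v hv hxv ↦ ?_⟩
  have hdist := hδ k x hx v hv (hxv.trans_le ((min_le_left _ _).trans (min_le_left _ _)))
  rw [Real.dist_eq] at hdist
  linarith [le_abs_self (a x - a v)]

lemma tendsto_indicator_mul_slope_sq {c : ℕ → ℝ → ℝ} {h : ℕ → ℝ} {x A D : ℝ} (hx : x ∈ Ioo l r)
    (hh_ne : ∀ k, h k ≠ 0) (hh : Tendsto h atTop (𝓝 0))
    (hc : Tendsto (fun k ↦ c k x) atTop (𝓝 A)) (hu : HasDerivAt u D x) :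
    Tendsto (fun k ↦ (Ioo l (r - h k)).indicator
      (fun x ↦ c k x * ((h k)⁻¹ * (u (x + h k) - u x)) ^ 2) x) atTop (𝓝 (A * D ^ 2)) := by
  have hslope : Tendsto (fun k ↦ (h k)⁻¹ • (u (x + h k) - u x)) atTop (𝓝 D) :=
    hu.tendsto_slope_zero.comp (tendsto_nhdsWithin_iff.2 ⟨hh, Eventually.of_forall hh_ne⟩)
  refine (hc.mul (hslope.pow 2)).congr' ?_
  filter_upwards [hh.eventually (gt_mem_nhds (sub_pos.2 hx.2))] with k hk
  have hmem : x ∈ Ioo l (r - h k) := ⟨hx.1, by linarith⟩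
  rw [indicator_of_mem hmem, smul_eq_mul]

/- The energy is the limit of the energies of difference quotients, weighted by a lower bound of
`a` on the interval spanned by the quotient; those involve no derivatives and so pass to pointwise
limits. -/
lemma integral_mul_deriv_sq_le_of_frequently (hlr : l < r) (ha_cont : ContinuousOn a (Icc l r))
    (ha : ∀ x ∈ Icc l r, 0 ≤ a x) (hu : ContinuousOn u (Icc l r))
    (hu' : ∀ x ∈ Ioo l r, HasDerivAt u (u' x) x)
    (hy : ∀ n, ContinuousOn (y n) (Icc l r))
    (hy' : ∀ n, ∀ x ∈ Ioo l r, HasDerivAt (y n) (y' n x) x)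
    (hint : ∀ n, IntegrableOn (fun x ↦ a x * y' n x ^ 2) (Ioo l r))
    (hyu : ∀ x ∈ Icc l r, Tendsto (fun n ↦ y n x) atTop (𝓝 (u x)))
    (hK : ∃ᶠ n in atTop, ∫ x in Ioo l r, a x * y' n x ^ 2 ≤ K) :
    ∫ x in Ioo l r, a x * u' x ^ 2 ≤ K := by
  obtain ⟨h, ε, hh, hh_lim, hε_lim, hε⟩ := exists_seq_forall_sub_le hlr ha_cont
  set c : ℕ → ℝ → ℝ := fun k x ↦ max (a x - ε k) 0
  have hIoo : ∀ k, Ioo l (r - h k) ⊆ Ioo l r := fun k ↦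
    Ioo_subset_Ioo_right (by linarith [(hh k).1])
  have hIcc : ∀ k, Icc l (r - h k) ⊆ Icc l r := fun k ↦
    Icc_subset_Icc_right (by linarith [(hh k).1])
  have hc_cont : ∀ k, ContinuousOn (c k) (Icc l (r - h k)) := fun k ↦
    ((ha_cont.mono (hIcc k)).sub continuousOn_const).sup continuousOn_const
  refine integral_le_of_frequently_integral_le (f := fun k ↦ (Ioo l (r - h k)).indicator
      fun x ↦ c k x * ((h k)⁻¹ * (u (x + h k) - u x)) ^ 2) (fun k ↦ ?_)
    (fun k ↦ ae_of_all _ (indicator_nonneg fun x _ ↦ mul_nonneg (le_max_right _ _) (sq_nonneg _)))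
    (ae_restrict_of_forall_mem measurableSet_Ioo fun x hx ↦ ?_) (Frequently.of_forall fun k ↦ ?_)
  · exact ((integrable_indicator_iff measurableSet_Ioo).2
      (integrableOn_mul_slope_sq (hh k).1.le (hc_cont k) hu)).integrableOn
  · have hc_lim : Tendsto (fun k ↦ c k x) atTop (𝓝 (a x)) := by
      simpa only [sub_zero, max_eq_left (ha x (Ioo_subset_Icc_self hx))] using
        (hε_lim.const_sub (a x)).max (tendsto_const_nhds (x := (0 : ℝ)))
    exact tendsto_indicator_mul_slope_sq hx (fun k ↦ (hh k).1.ne') hh_lim hc_lim (hu' x hx)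
  · rw [setIntegral_indicator measurableSet_Ioo, inter_eq_right.2 (hIoo k)]
    refine integral_mul_slope_sq_le_of_frequently (hh k) (hc_cont k)
      (fun x _ ↦ le_max_right _ _) (fun x hx v hv ↦ ?_)
      (fun x hx ↦ ha x (Ioo_subset_Icc_self hx)) hy hy' hint hyu hK
    have hv_mem : v ∈ Icc l r := ⟨(hx.1.trans hv.1).le, by linarith [hv.2, hx.2]⟩
    refine max_le (hε k x (Ioo_subset_Icc_self (hIoo k hx)) v hv_mem ?_) (ha v hv_mem)
    rw [abs_lt]
    constructor <;> linarith [hv.1, hv.2]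

end LowerSemicontinuity

end OneDimensionalCalculus

section DirichletEnergy

variable {a F w y y' : ℝ → ℝ} {l r : ℝ}

lemma exists_abs_le_of_hasDerivAt_of_integrableOn (hF : ∀ x ∈ Ioo l r, HasDerivAt F (w x) x)
    (hw : IntegrableOn w (Ioo l r)) : ∃ B, ∀ x ∈ Ioo l r, |F x| ≤ B := by
  rcases (Ioo l r).eq_empty_or_nonempty with hempty | ⟨x₀, hx₀⟩
  · exact ⟨0, by simp [hempty]⟩
  refine ⟨|F x₀| + ∫ x in Ioo l r, |w x|, fun x hx ↦ ?_⟩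
  have hsub : uIcc x₀ x ⊆ Ioo l r := ordConnected_Ioo.uIcc_subset hx₀ hx
  have hftc : ∫ v in x₀..x, w v = F x - F x₀ :=
    intervalIntegral.integral_eq_sub_of_hasDerivAt (fun v hv ↦ hF v (hsub hv))
      (intervalIntegrable_iff.2 (hw.mono_set (uIoc_subset_uIcc.trans hsub)))
  have hbound : |F x - F x₀| ≤ ∫ v in Ioo l r, |w v| := by
    rw [← hftc]
    exact intervalIntegral.norm_integral_le_integral_norm_uIoc.trans
      (setIntegral_mono_set hw.norm (ae_of_all _ fun v ↦ norm_nonneg _)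
        (uIoc_subset_uIcc.trans hsub).eventuallyLE)
  linarith [abs_sub_abs_le_abs_sub (F x) (F x₀)]

lemma integrableOn_mul_continuousOn_Icc (hw : IntegrableOn w (Ioo l r))
    (hy : ContinuousOn y (Icc l r)) : IntegrableOn (fun x ↦ w x * y x) (Ioo l r) :=
  hw.mul_continuousOn_of_subset hy measurableSet_Ioo isCompact_Icc Ioo_subset_Icc_self

lemma integral_mul_deriv_eq_neg_of_eq_zero (hlr : l < r)
    (hF : ∀ x ∈ Ioo l r, HasDerivAt F (w x) x) (hw : IntegrableOn w (Ioo l r))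
    (hy : ContinuousOn y (Icc l r)) (hy' : ∀ x ∈ Ioo l r, HasDerivAt y (y' x) x)
    (hyl : y l = 0) (hyr : y r = 0) (hFy : IntegrableOn (fun x ↦ F x * y' x) (Ioo l r)) :
    ∫ x in Ioo l r, F x * y' x = -∫ x in Ioo l r, w x * y x := by
  have hwy := integrableOn_mul_continuousOn_Icc hw hy
  obtain ⟨B, hB⟩ := exists_abs_le_of_hasDerivAt_of_integrableOn hF hw
  have hlim : ∀ {f : Filter ℝ} {c : ℝ}, f ≤ 𝓝[Icc l r] c → c ∈ Icc l r → y c = 0 →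
      Ioo l r ∈ f → Tendsto (fun x ↦ F x * y x) f (𝓝 0) := fun hf hc hyc hIoo ↦
    isBoundedUnder_le_mul_tendsto_zero (isBoundedUnder_of_eventually_le (mem_of_superset hIoo hB))
      (hyc ▸ (hy _ hc).mono_left hf)
  have hint : IntervalIntegrable (fun x ↦ w x * y x + F x * y' x) volume l r :=
    (intervalIntegrable_iff_integrableOn_Ioo_of_le hlr.le).2 (hwy.add hFy)
  have hftc := intervalIntegral.integral_eq_sub_of_hasDerivAt_of_tendsto hlr
    (fun x hx ↦ (hF x hx).mul (hy' x hx)) hint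
    (hlim (nhdsWithin_Ioo_eq_nhdsGT hlr ▸ nhdsWithin_mono _ Ioo_subset_Icc_self)
      (left_mem_Icc.2 hlr.le) hyl (Ioo_mem_nhdsGT hlr))
    (hlim (nhdsWithin_Ioo_eq_nhdsLT hlr ▸ nhdsWithin_mono _ Ioo_subset_Icc_self)
      (right_mem_Icc.2 hlr.le) hyr (Ioo_mem_nhdsLT hlr))
  rw [intervalIntegral.integral_of_le hlr.le, integral_Ioc_eq_integral_Ioo,
    integral_add hwy hFy] at hftc
  linarith

/-- The degenerate Dirichlet energy `∫ₗʳ a v²` of a function with derivative `v`. -/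
noncomputable def energy (a : ℝ → ℝ) (l r : ℝ) (v : ℝ → ℝ) : ℝ := ∫ x in Ioo l r, a x * v x ^ 2

lemma energy_nonneg (ha : ∀ x ∈ Icc l r, 0 ≤ a x) (v : ℝ → ℝ) : 0 ≤ energy a l r v :=
  setIntegral_nonneg measurableSet_Ioo fun x hx ↦
    mul_nonneg (ha x (Ioo_subset_Icc_self hx)) (sq_nonneg _)

lemma energy_const_mul (a v : ℝ → ℝ) (l r c : ℝ) :
    energy a l r (fun x ↦ c * v x) = c ^ 2 * energy a l r v := by
  rw [energy, energy, ← integral_const_mul]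
  exact integral_congr_ae (ae_of_all _ fun x ↦ by ring)

/-- The classical counterpart of membership in the weighted Dirichlet space `H¹ₐ(l, r)`: `y` is
continuous on `[l, r]`, vanishes at both ends, and has a derivative `y'` of finite energy. -/
structure IsDirichletFunction (a : ℝ → ℝ) (l r : ℝ) (y y' : ℝ → ℝ) : Prop where
  continuousOn : ContinuousOn y (Icc l r)
  hasDerivAt : ∀ x ∈ Ioo l r, HasDerivAt y (y' x) x
  left_eq_zero : y l = 0
  right_eq_zero : y r = 0
  integrableOn_energy : IntegrableOn (fun x ↦ a x * y' x ^ 2) (Ioo l r)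

namespace IsDirichletFunction

variable {u u' : ℝ → ℝ}

lemma integrableOn_mul_mul (ha_cont : ContinuousOn a (Icc l r)) (ha : ∀ x ∈ Icc l r, 0 ≤ a x)
    (hu : IsDirichletFunction a l r u u') (hy : IsDirichletFunction a l r y y') :
    IntegrableOn (fun x ↦ a x * (u' x * y' x)) (Ioo l r) := by
  have hmeas : ∀ {f f'}, IsDirichletFunction a l r f f' →
      AEStronglyMeasurable f' (volume.restrict (Ioo l r)) := fun hf ↦
    aestronglyMeasurable_of_hasDerivAt_off_countable measurableSet_Ioo countable_empty
      fun x hx ↦ hf.hasDerivAt x hx.1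
  refine integrable_mul_mul_of_sq (ae_restrict_of_forall_mem measurableSet_Ioo fun x hx ↦
    ha x (Ioo_subset_Icc_self hx)) ?_ hu.integrableOn_energy hy.integrableOn_energy
  exact ((ha_cont.mono Ioo_subset_Icc_self).aestronglyMeasurable measurableSet_Ioo).mul
    ((hmeas hu).mul (hmeas hy))

lemma integral_mul_mul_eq_neg (hlr : l < r) (ha_cont : ContinuousOn a (Icc l r))
    (ha : ∀ x ∈ Icc l r, 0 ≤ a x) (hu : IsDirichletFunction a l r u u')
    (hy : IsDirichletFunction a l r y y')
    (hflux : ∀ x ∈ Ioo l r, HasDerivAt (fun v ↦ a v * u' v) (w x) x)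
    (hw : IntegrableOn w (Ioo l r)) :
    ∫ x in Ioo l r, a x * (u' x * y' x) = -∫ x in Ioo l r, w x * y x := by
  have hint := integrableOn_mul_mul ha_cont ha hu hy
  simp only [← mul_assoc] at hint ⊢
  exact integral_mul_deriv_eq_neg_of_eq_zero hlr hflux hw hy.continuousOn hy.hasDerivAt
    hy.left_eq_zero hy.right_eq_zero hint

lemma energy_eq_neg (hlr : l < r) (ha_cont : ContinuousOn a (Icc l r))
    (ha : ∀ x ∈ Icc l r, 0 ≤ a x) (hu : IsDirichletFunction a l r u u')
    (hflux : ∀ x ∈ Ioo l r, HasDerivAt (fun v ↦ a v * u' v) (w x) x)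
    (hw : IntegrableOn w (Ioo l r)) : energy a l r u' = -∫ x in Ioo l r, w x * u x := by
  simpa only [energy, sq] using integral_mul_mul_eq_neg hlr ha_cont ha hu hu hflux hw

-- Convexity: `-2 (a u')'` is the gradient of the energy at `u`.
lemma energy_sub_energy_le (hlr : l < r) (ha_cont : ContinuousOn a (Icc l r))
    (ha : ∀ x ∈ Icc l r, 0 ≤ a x) (hu : IsDirichletFunction a l r u u')
    (hy : IsDirichletFunction a l r y y')
    (hflux : ∀ x ∈ Ioo l r, HasDerivAt (fun v ↦ a v * u' v) (w x) x)
    (hw : IntegrableOn w (Ioo l r)) :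
    energy a l r u' - energy a l r y' ≤ -2 * ∫ x in Ioo l r, w x * (u x - y x) := by
  have hcross : 2 * ∫ x in Ioo l r, a x * (u' x * y' x) ≤ energy a l r u' + energy a l r y' := by
    rw [energy, energy, ← integral_const_mul,
      ← integral_add hu.integrableOn_energy hy.integrableOn_energy]
    refine setIntegral_mono_on ((integrableOn_mul_mul ha_cont ha hu hy).const_mul 2)
      (hu.integrableOn_energy.add hy.integrableOn_energy) measurableSet_Ioo fun x hx ↦ ?_
    nlinarith [mul_nonneg (ha x (Ioo_subset_Icc_self hx)) (sq_nonneg (u' x - y' x))]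
  have hsub : ∫ x in Ioo l r, w x * (u x - y x) =
      (∫ x in Ioo l r, w x * u x) - ∫ x in Ioo l r, w x * y x := by
    simp only [mul_sub]
    exact integral_sub (integrableOn_mul_continuousOn_Icc hw hu.continuousOn)
      (integrableOn_mul_continuousOn_Icc hw hy.continuousOn)
  linarith [energy_eq_neg hlr ha_cont ha hu hflux hw,
    integral_mul_mul_eq_neg hlr ha_cont ha hu hy hflux hw]

end IsDirichletFunction

end DirichletEnergy

section TimeDelay

variable {f f' : ℝ → ℝ} {S η : ℝ}

/-- The delayed time `t - η`, frozen at the initial time `0`. Composing with `delay η` shifts a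
function of time without leaving `[0, S]`. -/
def delay (η t : ℝ) : ℝ := max (t - η) 0

lemma continuous_delay (η : ℝ) : Continuous (delay η) := by
  unfold delay
  fun_prop

lemma delay_mem_Icc {t : ℝ} (hη : 0 ≤ η) (ht : t ∈ Icc 0 S) : delay η t ∈ Icc 0 S :=
  ⟨le_max_right _ _, max_le (by linarith [ht.2]) (ht.1.trans ht.2)⟩

lemma intervalIntegrable_sub_delay (hη : η ∈ Icc 0 S) (hf : IntervalIntegrable f volume 0 S) :
    IntervalIntegrable (fun t ↦ f t - f (delay η t)) volume 0 S ∧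
      ∫ t in 0..S, (f t - f (delay η t)) = (∫ t in S - η..S, f t) - η * f 0 := by
  set y : ℝ → ℝ := fun t ↦ f (max t 0)
  have hy_pos : ∀ {p q}, 0 ≤ p → p ≤ q → EqOn f y (uIcc p q) := fun hp hpq t ht ↦ by
    rw [uIcc_of_le hpq] at ht
    simp only [y, max_eq_left (hp.trans ht.1)]
  have hy_neg : EqOn (fun _ ↦ f 0) y (uIcc (-η) 0) := fun t ht ↦ by
    rw [uIcc_of_le (by linarith [hη.1])] at ht
    simp only [y, max_eq_right ht.2]
  have hy : IntervalIntegrable y volume (-η) S :=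
    (intervalIntegrable_const.congr fun t ht ↦ hy_neg (uIoc_subset_uIcc ht)).trans
      (hf.congr fun t ht ↦ hy_pos le_rfl (hη.1.trans hη.2) (uIoc_subset_uIcc ht))
  have hshift : η ∈ Icc 0 (S - -η) := ⟨hη.1, by linarith [hη.1, hη.2]⟩
  have hcongr : EqOn (fun t ↦ y (t - η + η) - y (t - η)) (fun t ↦ f t - f (delay η t))
      (uIcc 0 S) := fun t ht ↦ by
    simp only [sub_add_cancel, ← hy_pos le_rfl (hη.1.trans hη.2) ht]
    rfl
  constructor
  · have hint := ((intervalIntegrable_shift hshift hy).sub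
      (hy.mono_set (uIcc_subset_uIcc left_mem_uIcc
        (mem_uIcc_of_le (by linarith [hη.1, hη.2]) (by linarith [hη.1]))))).comp_sub_right η
    rw [neg_add_cancel, sub_add_cancel] at hint
    exact hint.congr fun t ht ↦ hcongr (uIoc_subset_uIcc ht)
  · have hint := intervalIntegral_shift_sub hshift hy
    rw [neg_add_cancel, ← intervalIntegral.integral_congr hy_neg,
      ← intervalIntegral.integral_congr (hy_pos (by linarith [hη.2]) (by linarith [hη.1])),
      intervalIntegral.integral_const, sub_neg_eq_add, zero_add, smul_eq_mul] at hint
    rw [← hint, ← intervalIntegral.integral_congr hcongr,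
      intervalIntegral.integral_comp_sub_right (fun t ↦ y (t + η) - y t), zero_sub]

lemma hasDerivAt_comp_max_zero {t : ℝ} (ht : t ≠ 0) (hf : 0 < t → HasDerivAt f (f' t) t) :
    HasDerivAt (fun v ↦ f (max v 0)) ((Ioi 0).indicator f' t) t := by
  rcases lt_or_gt_of_ne ht with ht | ht
  · rw [indicator_of_notMem (notMem_Ioi.2 ht.le)]
    refine (hasDerivAt_const t (f 0)).congr_of_eventuallyEq ?_
    filter_upwards [Iio_mem_nhds ht] with v hv using congrArg f (max_eq_right (le_of_lt hv))
  · rw [indicator_of_mem (mem_Ioi.2 ht)]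
    refine (hf ht).congr_of_eventuallyEq ?_
    filter_upwards [Ioi_mem_nhds ht] with v hv using congrArg f (max_eq_left (le_of_lt hv))

lemma integral_sub_delay_sq_le (hη : η ∈ Icc 0 S) (hf : ContinuousOn f (Icc 0 S))
    (hf' : ∀ t ∈ Ioo 0 S, HasDerivAt f (f' t) t)
    (hint : IntegrableOn (fun t ↦ f' t ^ 2) (Ioo 0 S)) :
    ∫ t in Ioo 0 S, (f t - f (delay η t)) ^ 2 ≤ η ^ 2 * ∫ t in Ioo 0 S, f' t ^ 2 := by
  set y : ℝ → ℝ := fun t ↦ f (max t 0)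
  set y' : ℝ → ℝ := (Ioi 0).indicator f'
  have hS : 0 ≤ S := hη.1.trans hη.2
  have hy : ContinuousOn y (Icc (-η) S) := hf.comp (by fun_prop) fun t ht ↦
    ⟨le_max_right _ _, max_le ht.2 hS⟩
  have hy' : ∀ t ∈ Ioo (-η) S \ {0}, HasDerivAt y (y' t) t := fun t ht ↦
    hasDerivAt_comp_max_zero ht.2 fun ht0 ↦ hf' t ⟨ht0, ht.1.2⟩
  have hy'_sq : (fun t ↦ 1 * y' t ^ 2) = (Ioi 0).indicator fun t ↦ f' t ^ 2 := by
    ext t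
    by_cases ht : t ∈ Ioi (0 : ℝ) <;> simp [y', ht]
  have hset : Ioi 0 ∩ Ioo (-η) S = Ioo 0 S := by
    ext t
    exact ⟨fun ht ↦ ⟨ht.1, ht.2.2⟩, fun ht ↦ ⟨ht.1, by linarith [ht.1, hη.1], ht.2⟩⟩
  have hbound := integral_mul_shift_sub_sq_le (c := fun _ ↦ 1) (a := fun _ ↦ 1) (h := η)
    ⟨hη.1, by linarith [hη.1, hη.2]⟩ (countable_singleton 0) hy hy' (fun _ _ ↦ zero_le_one)
    (fun _ _ _ _ ↦ le_rfl) (fun _ _ ↦ zero_le_one)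
    (by rwa [hy'_sq, integrableOn_indicator_iff measurableSet_Ioi, hset])
  rw [hy'_sq, setIntegral_indicator measurableSet_Ioi, inter_comm, hset] at hbound
  refine le_trans (le_of_eq ?_) hbound
  have hchange := intervalIntegral.integral_comp_sub_right (a := 0) (b := S)
    (fun t ↦ 1 * (y (t + η) - y t) ^ 2) η
  rw [zero_sub, intervalIntegral.integral_of_le hS, intervalIntegral.integral_of_le
    (by linarith), integral_Ioc_eq_integral_Ioo, integral_Ioc_eq_integral_Ioo] at hchange
  rw [← hchange]
  refine setIntegral_congr_fun measurableSet_Ioo fun t ht ↦ ?_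
  simp only [one_mul, sub_add_cancel, y, max_eq_left ht.1.le, delay]

end TimeDelay

section Cylinder

variable {a : ℝ → ℝ} {l r S : ℝ}

/-- The open space-time cylinder `(l, r) × (0, S)`. -/
def timeCylinder (l r S : ℝ) : Set (ℝ × ℝ) := Ioo l r ×ˢ Ioo 0 S

lemma isOpen_timeCylinder : IsOpen (timeCylinder l r S) := isOpen_Ioo.prod isOpen_Ioo

lemma measurableSet_timeCylinder : MeasurableSet (timeCylinder l r S) :=
  isOpen_timeCylinder.measurableSet

lemma timeCylinder_subset_Icc : timeCylinder l r S ⊆ Icc l r ×ˢ Icc 0 S :=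
  prod_mono Ioo_subset_Icc_self Ioo_subset_Icc_self

lemma restrict_timeCylinder : (volume : Measure (ℝ × ℝ)).restrict (timeCylinder l r S) =
    (volume.restrict (Ioo l r)).prod (volume.restrict (Ioo 0 S)) := by
  rw [timeCylinder, Measure.volume_eq_prod, Measure.prod_restrict]

lemma memLp_two_timeCylinder_of_continuousOn {y : ℝ × ℝ → ℝ}
    (hy : ContinuousOn y (Icc l r ×ˢ Icc 0 S)) :
    MemLp y 2 (volume.restrict (timeCylinder l r S)) :=
  (memLp_two_iff_integrable_sq ((hy.mono timeCylinder_subset_Icc).aestronglyMeasurable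
    measurableSet_timeCylinder)).2 (((hy.pow 2).integrableOn_compact
      (isCompact_Icc.prod isCompact_Icc)).mono_set timeCylinder_subset_Icc)

lemma isFiniteMeasure_restrict_timeCylinder :
    IsFiniteMeasure ((volume : Measure (ℝ × ℝ)).restrict (timeCylinder l r S)) := by
  rw [restrict_timeCylinder]
  infer_instance

lemma measurable_indicator_of_continuousOn {f : ℝ × ℝ → ℝ}
    (hf : ContinuousOn f (timeCylinder l r S)) : Measurable ((timeCylinder l r S).indicator f) := by
  classical
  rw [← piecewise_eq_indicator]
  exact hf.measurable_piecewise continuousOn_const measurableSet_timeCylinder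

/-- `z` is a classical function on `[l, r] × J` with homogeneous Dirichlet data at `x = l, r`:
it is continuous, `zx`, `w` and `zt` are its derivatives `z_x`, `(a z_x)_x` and `z_t`, the last two
at interior times only, and `∫ₗʳ a z_x²` is finite at all times. -/
structure IsClassicalOn (a : ℝ → ℝ) (l r : ℝ) (J : Set ℝ) (z zx zt w : ℝ → ℝ → ℝ) : Prop where
  continuousOn : ContinuousOn (fun p : ℝ × ℝ ↦ z p.1 p.2) (Icc l r ×ˢ J)
  hasDerivAt_space : ∀ x ∈ Ioo l r, ∀ t ∈ J, HasDerivAt (fun v ↦ z v t) (zx x t) x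
  hasDerivAt_flux : ∀ x ∈ Ioo l r, ∀ t ∈ interior J,
    HasDerivAt (fun v ↦ a v * zx v t) (w x t) x
  hasDerivAt_time : ∀ x ∈ Ioo l r, ∀ t ∈ interior J, HasDerivAt (fun u ↦ z x u) (zt x t) t
  left_eq_zero : ∀ t ∈ J, z l t = 0
  right_eq_zero : ∀ t ∈ J, z r t = 0
  integrableOn_energy : ∀ t ∈ J, IntegrableOn (fun x ↦ a x * zx x t ^ 2) (Ioo l r)

namespace IsClassicalOn

variable {J J' : Set ℝ} {z zx zt w : ℝ → ℝ → ℝ}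

lemma mono (h : IsClassicalOn a l r J z zx zt w) (hJ : J' ⊆ J) :
    IsClassicalOn a l r J' z zx zt w where
  continuousOn := h.continuousOn.mono (prod_mono_right hJ)
  hasDerivAt_space x hx t ht := h.hasDerivAt_space x hx t (hJ ht)
  hasDerivAt_flux x hx t ht := h.hasDerivAt_flux x hx t (interior_mono hJ ht)
  hasDerivAt_time x hx t ht := h.hasDerivAt_time x hx t (interior_mono hJ ht)
  left_eq_zero t ht := h.left_eq_zero t (hJ ht)
  right_eq_zero t ht := h.right_eq_zero t (hJ ht)
  integrableOn_energy t ht := h.integrableOn_energy t (hJ ht)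

lemma time_mul (h : IsClassicalOn a l r J z zx zt w) {ρ ρ' : ℝ → ℝ}
    (hρ : ∀ t ∈ J, HasDerivAt ρ (ρ' t) t) :
    IsClassicalOn a l r J (fun x t ↦ ρ t * z x t) (fun x t ↦ ρ t * zx x t)
      (fun x t ↦ ρ' t * z x t + ρ t * zt x t) (fun x t ↦ ρ t * w x t) where
  continuousOn := ContinuousOn.mul (fun p hp ↦ ((hρ p.2 hp.2).continuousAt.comp
    continuousAt_snd).continuousWithinAt) h.continuousOn
  hasDerivAt_space x hx t ht := (h.hasDerivAt_space x hx t ht).const_mul (ρ t)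
  hasDerivAt_flux x hx t ht := by
    simpa only [mul_left_comm] using (h.hasDerivAt_flux x hx t ht).const_mul (ρ t)
  hasDerivAt_time x hx t ht := (hρ t (interior_subset ht)).mul (h.hasDerivAt_time x hx t ht)
  left_eq_zero t ht := by rw [h.left_eq_zero t ht, mul_zero]
  right_eq_zero t ht := by rw [h.right_eq_zero t ht, mul_zero]
  integrableOn_energy t ht := by
    simpa only [IntegrableOn, mul_pow, mul_left_comm] using
      (h.integrableOn_energy t ht).const_mul (ρ t ^ 2)

lemma isDirichletFunction (h : IsClassicalOn a l r J z zx zt w) {t : ℝ} (ht : t ∈ J) :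
    IsDirichletFunction a l r (fun x ↦ z x t) (fun x ↦ zx x t) where
  continuousOn := h.continuousOn.comp (continuousOn_id.prodMk continuousOn_const)
    fun _ hx ↦ ⟨hx, ht⟩
  hasDerivAt x hx := h.hasDerivAt_space x hx t ht
  left_eq_zero := h.left_eq_zero t ht
  right_eq_zero := h.right_eq_zero t ht
  integrableOn_energy := h.integrableOn_energy t ht

lemma continuousOn_time (h : IsClassicalOn a l r J z zx zt w) {x : ℝ} (hx : x ∈ Icc l r) :
    ContinuousOn (fun t ↦ z x t) J :=
  h.continuousOn.comp (continuousOn_const.prodMk continuousOn_id) fun _ ht ↦ ⟨hx, ht⟩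

section Measurability

lemma measurable_indicator_space (h : IsClassicalOn a l r (Icc 0 S) z zx zt w) :
    Measurable ((timeCylinder l r S).indicator fun p ↦ zx p.1 p.2) :=
  measurable_indicator_of_hasLineDerivAt isOpen_timeCylinder
    (measurable_indicator_of_continuousOn (h.continuousOn.mono timeCylinder_subset_Icc))
    fun p hp ↦ hasLineDerivAt_fst_of_hasDerivAt
      (h.hasDerivAt_space p.1 hp.1 p.2 (Ioo_subset_Icc_self hp.2))

lemma aestronglyMeasurable_space (h : IsClassicalOn a l r (Icc 0 S) z zx zt w) :
    AEStronglyMeasurable (fun p : ℝ × ℝ ↦ zx p.1 p.2) (volume.restrict (timeCylinder l r S)) :=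
  (aestronglyMeasurable_indicator_iff measurableSet_timeCylinder).1
    h.measurable_indicator_space.aestronglyMeasurable

lemma aestronglyMeasurable_time (h : IsClassicalOn a l r (Icc 0 S) z zx zt w) :
    AEStronglyMeasurable (fun p : ℝ × ℝ ↦ zt p.1 p.2) (volume.restrict (timeCylinder l r S)) :=
  (aestronglyMeasurable_indicator_iff measurableSet_timeCylinder).1
    (measurable_indicator_of_hasLineDerivAt isOpen_timeCylinder
      (measurable_indicator_of_continuousOn (h.continuousOn.mono timeCylinder_subset_Icc))
      fun p hp ↦ hasLineDerivAt_snd_of_hasDerivAt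
        (h.hasDerivAt_time p.1 hp.1 p.2 (by rw [interior_Icc]; exact hp.2))).aestronglyMeasurable

lemma aestronglyMeasurable_flux (ha_cont : ContinuousOn a (Icc l r))
    (h : IsClassicalOn a l r (Icc 0 S) z zx zt w) :
    AEStronglyMeasurable (fun p : ℝ × ℝ ↦ w p.1 p.2) (volume.restrict (timeCylinder l r S)) := by
  have hflux : Measurable ((timeCylinder l r S).indicator fun p ↦ a p.1 * zx p.1 p.2) := by
    rw [indicator_mul]
    exact (measurable_indicator_of_continuousOn (ha_cont.comp continuousOn_fst
      fun p hp ↦ Ioo_subset_Icc_self hp.1)).mul h.measurable_indicator_space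
  exact (aestronglyMeasurable_indicator_iff measurableSet_timeCylinder).1
    (measurable_indicator_of_hasLineDerivAt isOpen_timeCylinder hflux
      fun p hp ↦ hasLineDerivAt_fst_of_hasDerivAt (f := fun x t ↦ a x * zx x t)
        (h.hasDerivAt_flux p.1 hp.1 p.2 (by rw [interior_Icc]; exact hp.2))).aestronglyMeasurable

end Measurability

section EnergyIdentity

lemma ae_integrableOn_flux (hw : MemLp (fun p : ℝ × ℝ ↦ w p.1 p.2) 2
    (volume.restrict (timeCylinder l r S))) :
    ∀ᵐ t ∂volume.restrict (Ioo 0 S), IntegrableOn (fun x ↦ w x t) (Ioo l r) := by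
  have := isFiniteMeasure_restrict_timeCylinder (l := l) (r := r) (S := S)
  have hint := hw.integrable one_le_two
  rw [restrict_timeCylinder] at hint
  exact hint.prod_left_ae

lemma ae_energy_eq_neg (hlr : l < r) (ha_cont : ContinuousOn a (Icc l r))
    (ha : ∀ x ∈ Icc l r, 0 ≤ a x) (h : IsClassicalOn a l r (Icc 0 S) z zx zt w)
    (hw : MemLp (fun p : ℝ × ℝ ↦ w p.1 p.2) 2 (volume.restrict (timeCylinder l r S))) :
    ∀ᵐ t ∂volume.restrict (Ioo 0 S),
      energy a l r (fun x ↦ zx x t) = -∫ x in Ioo l r, w x t * z x t := by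
  filter_upwards [ae_integrableOn_flux hw, ae_restrict_mem measurableSet_Ioo] with t hwt ht
  exact (h.isDirichletFunction (Ioo_subset_Icc_self ht)).energy_eq_neg hlr ha_cont ha
    (fun x hx ↦ h.hasDerivAt_flux x hx t (by rw [interior_Icc]; exact ht)) hwt

lemma integrableOn_energy_time (hlr : l < r) (ha_cont : ContinuousOn a (Icc l r))
    (ha : ∀ x ∈ Icc l r, 0 ≤ a x) (h : IsClassicalOn a l r (Icc 0 S) z zx zt w)
    (hw : MemLp (fun p : ℝ × ℝ ↦ w p.1 p.2) 2 (volume.restrict (timeCylinder l r S))) :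
    IntegrableOn (fun t ↦ energy a l r (fun x ↦ zx x t)) (Ioo 0 S) := by
  have hwz := hw.integrable_mul (memLp_two_timeCylinder_of_continuousOn h.continuousOn)
  rw [restrict_timeCylinder] at hwz
  exact hwz.integral_prod_right.neg.congr
    ((h.ae_energy_eq_neg hlr ha_cont ha hw).mono fun t ht ↦ ht.symm)

lemma integrableOn_mul_sq (hlr : l < r) (ha_cont : ContinuousOn a (Icc l r))
    (ha : ∀ x ∈ Icc l r, 0 ≤ a x) (h : IsClassicalOn a l r (Icc 0 S) z zx zt w)
    (hw : MemLp (fun p : ℝ × ℝ ↦ w p.1 p.2) 2 (volume.restrict (timeCylinder l r S))) :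
    IntegrableOn (fun p : ℝ × ℝ ↦ a p.1 * zx p.1 p.2 ^ 2) (timeCylinder l r S) := by
  have hmeas := ((ha_cont.comp continuousOn_fst fun p hp ↦
    Ioo_subset_Icc_self hp.1).aestronglyMeasurable (measurableSet_timeCylinder (l := l) (r := r)
      (S := S))).mul (h.aestronglyMeasurable_space.pow 2)
  rw [restrict_timeCylinder] at hmeas
  rw [IntegrableOn, restrict_timeCylinder]
  refine (integrable_prod_iff' hmeas).2 ⟨?_, ?_⟩
  · filter_upwards [ae_restrict_mem measurableSet_Ioo] with t ht
    exact h.integrableOn_energy t (Ioo_subset_Icc_self ht)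
  · refine (h.integrableOn_energy_time hlr ha_cont ha hw).congr (ae_of_all _ fun t ↦ ?_)
    exact setIntegral_congr_fun measurableSet_Ioo fun x hx ↦
      (Real.norm_of_nonneg (mul_nonneg (ha x (Ioo_subset_Icc_self hx)) (sq_nonneg _))).symm

lemma integral_mul_sq_eq_neg (hlr : l < r) (ha_cont : ContinuousOn a (Icc l r))
    (ha : ∀ x ∈ Icc l r, 0 ≤ a x) (h : IsClassicalOn a l r (Icc 0 S) z zx zt w)
    (hw : MemLp (fun p : ℝ × ℝ ↦ w p.1 p.2) 2 (volume.restrict (timeCylinder l r S))) :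
    ∫ p in timeCylinder l r S, a p.1 * zx p.1 p.2 ^ 2 =
      -∫ p in timeCylinder l r S, w p.1 p.2 * z p.1 p.2 := by
  have hint := h.integrableOn_mul_sq hlr ha_cont ha hw
  have hwz : Integrable (fun p : ℝ × ℝ ↦ w p.1 p.2 * z p.1 p.2)
      (volume.restrict (timeCylinder l r S)) :=
    hw.integrable_mul (memLp_two_timeCylinder_of_continuousOn h.continuousOn)
  rw [IntegrableOn, restrict_timeCylinder] at hint
  rw [restrict_timeCylinder] at hwz ⊢
  rw [integral_prod_symm _ hint, integral_prod_symm _ hwz, ← integral_neg]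
  exact integral_congr_ae (h.ae_energy_eq_neg hlr ha_cont ha hw)

end EnergyIdentity

end IsClassicalOn

end Cylinder

section EnergyInequality

variable {a : ℝ → ℝ} {l r S η : ℝ} {z zx zt w : ℝ → ℝ → ℝ}

/-- The backward difference quotient of `z` in time, with step `η`; before the initial time `z` is
extended by its initial value. -/
noncomputable def backwardQuotient (z : ℝ → ℝ → ℝ) (η : ℝ) (p : ℝ × ℝ) : ℝ :=
  η⁻¹ * (z p.1 p.2 - z p.1 (delay η p.2))

lemma continuousOn_backwardQuotient (hη : 0 ≤ η)
    (hz : ContinuousOn (fun p : ℝ × ℝ ↦ z p.1 p.2) (Icc l r ×ˢ Icc 0 S)) :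
    ContinuousOn (backwardQuotient z η) (Icc l r ×ˢ Icc 0 S) :=
  continuousOn_const.mul (hz.sub (hz.comp (f := fun p : ℝ × ℝ ↦ (p.1, delay η p.2))
    (continuousOn_fst.prodMk ((continuous_delay η).comp_continuousOn continuousOn_snd))
    fun _ hp ↦ ⟨hp.1, delay_mem_Icc hη hp.2⟩))

lemma tendsto_backwardQuotient {x t : ℝ} (ht : 0 < t) {z' : ℝ}
    (hz : HasDerivAt (fun u ↦ z x u) z' t) :
    Tendsto (fun η ↦ backwardQuotient z η (x, t)) (𝓝[>] 0) (𝓝 z') := by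
  have hneg : Tendsto (fun η : ℝ ↦ -η) (𝓝[>] 0) (𝓝[≠] 0) := by
    refine tendsto_nhdsWithin_iff.2 ⟨?_, ?_⟩
    · exact (Continuous.tendsto' continuous_neg 0 0 neg_zero).mono_left nhdsWithin_le_nhds
    · filter_upwards [self_mem_nhdsWithin] with η hη using neg_ne_zero.2 (ne_of_gt hη)
  refine (hz.tendsto_slope_zero.comp hneg).congr' ?_
  filter_upwards [Ioo_mem_nhdsGT ht] with η hη
  simp only [Function.comp_apply, backwardQuotient, delay, max_eq_left (sub_nonneg.2 hη.2.le),
    smul_eq_mul, ← sub_eq_add_neg, inv_neg]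
  ring

namespace IsClassicalOn

lemma memLp_backwardQuotient (hη : 0 ≤ η) (h : IsClassicalOn a l r (Icc 0 S) z zx zt w) :
    MemLp (backwardQuotient z η) 2 (volume.restrict (timeCylinder l r S)) :=
  memLp_two_timeCylinder_of_continuousOn (continuousOn_backwardQuotient hη h.continuousOn)

lemma integral_backwardQuotient_sq_le (hη : η ∈ Ioc 0 S)
    (h : IsClassicalOn a l r (Icc 0 S) z zx zt w)
    (hzt : MemLp (fun p : ℝ × ℝ ↦ zt p.1 p.2) 2 (volume.restrict (timeCylinder l r S))) :
    ∫ p in timeCylinder l r S, backwardQuotient z η p ^ 2 ≤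
      ∫ p in timeCylinder l r S, zt p.1 p.2 ^ 2 := by
  have hquot := (h.memLp_backwardQuotient hη.1.le).integrable_sq
  have hzt_sq := hzt.integrable_sq
  rw [restrict_timeCylinder] at hquot hzt_sq ⊢
  rw [integral_prod _ hquot, integral_prod _ hzt_sq]
  refine integral_mono_ae hquot.integral_prod_left hzt_sq.integral_prod_left ?_
  filter_upwards [hzt_sq.prod_right_ae, ae_restrict_mem measurableSet_Ioo] with x hxt hx
  calc ∫ t in Ioo 0 S, backwardQuotient z η (x, t) ^ 2
      = (η⁻¹) ^ 2 * ∫ t in Ioo 0 S, (z x t - z x (delay η t)) ^ 2 := by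
        simp only [backwardQuotient, mul_pow, integral_const_mul]
    _ ≤ (η⁻¹) ^ 2 * (η ^ 2 * ∫ t in Ioo 0 S, zt x t ^ 2) :=
        mul_le_mul_of_nonneg_left (integral_sub_delay_sq_le ⟨hη.1.le, hη.2⟩
          (h.continuousOn_time (Ioo_subset_Icc_self hx))
          (fun t ht ↦ h.hasDerivAt_time x hx t (by rwa [interior_Icc])) hxt) (sq_nonneg _)
    _ = ∫ t in Ioo 0 S, zt x t ^ 2 := by
        rw [← mul_assoc, ← mul_pow, inv_mul_cancel₀ hη.1.ne', one_pow, one_mul]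

lemma ae_energy_sub_energy_delay_le (hlr : l < r) (ha_cont : ContinuousOn a (Icc l r))
    (ha : ∀ x ∈ Icc l r, 0 ≤ a x) (hη : 0 < η) (h : IsClassicalOn a l r (Icc 0 S) z zx zt w)
    (hw : MemLp (fun p : ℝ × ℝ ↦ w p.1 p.2) 2 (volume.restrict (timeCylinder l r S))) :
    ∀ᵐ t ∂volume.restrict (Ioo 0 S),
      energy a l r (fun x ↦ zx x t) - energy a l r (fun x ↦ zx x (delay η t)) ≤
        -2 * η * ∫ x in Ioo l r, w x t * backwardQuotient z η (x, t) := by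
  filter_upwards [ae_integrableOn_flux hw, ae_restrict_mem measurableSet_Ioo] with t hwt ht
  have ht' := Ioo_subset_Icc_self ht
  refine ((h.isDirichletFunction ht').energy_sub_energy_le hlr ha_cont ha
    (h.isDirichletFunction (delay_mem_Icc hη.le ht'))
    (fun x hx ↦ h.hasDerivAt_flux x hx t (by rwa [interior_Icc])) hwt).trans_eq ?_
  rw [mul_assoc, ← integral_const_mul η]
  refine congrArg (-2 * ·) (integral_congr_ae (ae_of_all _ fun x ↦ ?_))
  simp only [backwardQuotient]
  field_simp

lemma exists_energy_le (hlr : l < r) (ha_cont : ContinuousOn a (Icc l r))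
    (ha : ∀ x ∈ Icc l r, 0 ≤ a x) (hη : η ∈ Ioc 0 S) (h : IsClassicalOn a l r (Icc 0 S) z zx zt w)
    (hw : MemLp (fun p : ℝ × ℝ ↦ w p.1 p.2) 2 (volume.restrict (timeCylinder l r S))) :
    ∃ t ∈ Ioo (S - η) S, energy a l r (fun x ↦ zx x t) ≤ energy a l r (fun x ↦ zx x 0) -
      2 * ∫ p in timeCylinder l r S, w p.1 p.2 * backwardQuotient z η p := by
  set e : ℝ → ℝ := fun t ↦ energy a l r fun x ↦ zx x t
  have hS : 0 ≤ S := hη.1.le.trans hη.2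
  have he : IntervalIntegrable e volume 0 S :=
    (intervalIntegrable_iff_integrableOn_Ioo_of_le hS).2
      (h.integrableOn_energy_time hlr ha_cont ha hw)
  obtain ⟨hdiff, hdiff_eq⟩ := intervalIntegrable_sub_delay ⟨hη.1.le, hη.2⟩ he
  have hwq : Integrable (fun p : ℝ × ℝ ↦ w p.1 p.2 * backwardQuotient z η p)
      (volume.restrict (timeCylinder l r S)) :=
    hw.integrable_mul (h.memLp_backwardQuotient hη.1.le)
  rw [restrict_timeCylinder] at hwq ⊢
  have hle : ∫ t in Ioo 0 S, (e t - e (delay η t)) ≤ -2 * η * ∫ p, w p.1 p.2 *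
      backwardQuotient z η p ∂(volume.restrict (Ioo l r)).prod (volume.restrict (Ioo 0 S)) := by
    rw [integral_prod_symm _ hwq, ← integral_const_mul]
    exact integral_mono_ae ((intervalIntegrable_iff_integrableOn_Ioo_of_le hS).1 hdiff)
      (hwq.integral_prod_right.const_mul _)
      (h.ae_energy_sub_energy_delay_le hlr ha_cont ha hη.1 hw)
  rw [intervalIntegral.integral_of_le hS, integral_Ioc_eq_integral_Ioo,
    intervalIntegral.integral_of_le (by linarith [hη.1]), integral_Ioc_eq_integral_Ioo]
    at hdiff_eq
  have hvol : volume.real (Ioo (S - η) S) = η := by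
    rw [Real.volume_real_Ioo_of_le (by linarith [hη.1]), sub_sub_cancel]
  obtain ⟨t, ht, het⟩ := exists_le_setAverage (μ := volume) (s := Ioo (S - η) S) (f := e)
    (by simp [hη.1]) (by simp) ((h.integrableOn_energy_time hlr ha_cont ha hw).mono_set
      (Ioo_subset_Ioo_left (sub_nonneg.2 hη.2)))
  refine ⟨t, ht, het.trans ?_⟩
  rw [setAverage_eq, hvol, smul_eq_mul, inv_mul_le_iff₀ hη.1]
  linarith

lemma energy_le_of_frequently (hlr : l < r) (ha_cont : ContinuousOn a (Icc l r))
    (ha : ∀ x ∈ Icc l r, 0 ≤ a x) {J : Set ℝ} (h : IsClassicalOn a l r J z zx zt w) (hS : S ∈ J)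
    {t : ℕ → ℝ} (ht : ∀ n, t n ∈ J) (htS : Tendsto t atTop (𝓝 S)) {K : ℝ}
    (hK : ∃ᶠ n in atTop, energy a l r (fun x ↦ zx x (t n)) ≤ K) :
    energy a l r (fun x ↦ zx x S) ≤ K :=
  have hD := fun n ↦ h.isDirichletFunction (ht n)
  integral_mul_deriv_sq_le_of_frequently hlr ha_cont ha (h.isDirichletFunction hS).continuousOn
    (h.isDirichletFunction hS).hasDerivAt (fun n ↦ (hD n).continuousOn)
    (fun n ↦ (hD n).hasDerivAt) (fun n ↦ (hD n).integrableOn_energy)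
    (fun _ hx ↦ (h.continuousOn_time hx S hS).tendsto.comp
      (tendsto_nhdsWithin_iff.2 ⟨htS, Eventually.of_forall ht⟩)) hK

lemma energy_le (hS : 0 < S) (hlr : l < r) (ha_cont : ContinuousOn a (Icc l r))
    (ha : ∀ x ∈ Icc l r, 0 ≤ a x) (h : IsClassicalOn a l r (Icc 0 S) z zx zt w)
    (hzt : MemLp (fun p : ℝ × ℝ ↦ zt p.1 p.2) 2 (volume.restrict (timeCylinder l r S)))
    (hw : MemLp (fun p : ℝ × ℝ ↦ w p.1 p.2) 2 (volume.restrict (timeCylinder l r S))) :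
    energy a l r (fun x ↦ zx x S) ≤ energy a l r (fun x ↦ zx x 0) -
      2 * ∫ p in timeCylinder l r S, w p.1 p.2 * zt p.1 p.2 := by
  set η : ℕ → ℝ := fun n ↦ S / (n + 1)
  have hη : ∀ n, η n ∈ Ioc 0 S := fun n ↦
    ⟨by positivity, div_le_self hS.le (by linarith [n.cast_nonneg (α := ℝ)])⟩
  have hη_lim : Tendsto η atTop (𝓝 0) := by
    simpa only [mul_one_div, mul_zero] using tendsto_one_div_add_atTop_nhds_zero_nat.const_mul S
  have hη_within : Tendsto η atTop (𝓝[>] 0) :=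
    tendsto_nhdsWithin_iff.2 ⟨hη_lim, Eventually.of_forall fun n ↦ (hη n).1⟩
  have hquot := tendsto_integral_mul_of_integral_sq_le hw
    (fun n ↦ h.memLp_backwardQuotient (hη n).1.le) hzt
    (ae_restrict_of_forall_mem measurableSet_timeCylinder fun p hp ↦
      (tendsto_backwardQuotient hp.2.1
        (h.hasDerivAt_time p.1 hp.1 p.2 (by rw [interior_Icc]; exact hp.2))).comp hη_within)
    fun n ↦ h.integral_backwardQuotient_sq_le (hη n) hzt
  choose t ht ht_le using fun n ↦ h.exists_energy_le hlr ha_cont ha (hη n) hw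
  have ht_mem : ∀ n, t n ∈ Icc 0 S := fun n ↦
    ⟨by linarith [(ht n).1, (hη n).2], (ht n).2.le⟩
  have ht_lim : Tendsto t atTop (𝓝 S) := by
    refine tendsto_of_tendsto_of_tendsto_of_le_of_le ?_ tendsto_const_nhds
      (fun n ↦ (ht n).1.le) fun n ↦ (ht n).2.le
    simpa only [sub_zero] using hη_lim.const_sub S
  refine le_of_forall_pos_le_add fun ε hε ↦ h.energy_le_of_frequently hlr ha_cont ha
    (right_mem_Icc.2 hS.le) ht_mem ht_lim (Eventually.frequently ?_)
  filter_upwards [(hquot.const_mul (-2)).eventually_lt_const (lt_add_of_pos_right _ hε)] with n hn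
  exact (ht_le n).trans (by linarith)

end IsClassicalOn

end EnergyInequality

section ParabolicEstimate

lemma neg_two_mul_le_sq_sub_mul_div {m M b u w : ℝ} (hm : 0 < m) (hb : b ∈ Icc m M) :
    -2 * (w * u) ≤ (u - b * w) ^ 2 / m - u ^ 2 / M - m * w ^ 2 := by
  have hb_pos : 0 < b := hm.trans_le hb.1
  calc -2 * (w * u) = (u - b * w) ^ 2 / b - u ^ 2 / b - b * w ^ 2 := by field_simp; ring
    _ ≤ (u - b * w) ^ 2 / m - u ^ 2 / M - m * w ^ 2 := by gcongr <;> simp only [hb.1, hb.2]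

lemma sq_sub_mul_le_of_abs_le {α b c d u v w y Λ Φ : ℝ} (hα : 0 ≤ α) (hc : |c| ≤ Λ) (hd : |d| ≤ Λ)
    (hΦ : (u - b * w - d * √α * v + c * y) ^ 2 ≤ Φ) :
    (u - b * w) ^ 2 ≤ 3 * (Λ ^ 2 * (α * v ^ 2) + Λ ^ 2 * y ^ 2 + Φ) := by
  have hc_sq : (c * y) ^ 2 ≤ Λ ^ 2 * y ^ 2 := by
    rw [mul_pow]
    exact mul_le_mul_of_nonneg_right (sq_le_sq.2 (hc.trans (le_abs_self Λ))) (sq_nonneg y)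
  have hd_sq : (d * √α * v) ^ 2 ≤ Λ ^ 2 * (α * v ^ 2) := by
    rw [mul_pow, mul_pow, Real.sq_sqrt hα, mul_assoc]
    exact mul_le_mul_of_nonneg_right (sq_le_sq.2 (hd.trans (le_abs_self Λ)))
      (mul_nonneg hα (sq_nonneg v))
  generalize c * y = q, d * √α * v = p at *
  nlinarith [sq_nonneg (u - b * w - p + q - p), sq_nonneg (u - b * w - p + q + q),
    sq_nonneg (p + q)]

-- The multiple of `α v² + w y` absorbs the first order term; in the integrated inequality it
-- vanishes by the energy identity.
lemma neg_two_mul_sub_le {α b c d u v w y m M Λ Φ : ℝ} (hm : 0 < m) (hb : b ∈ Icc m M)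
    (hα : 0 ≤ α) (hc : |c| ≤ Λ) (hd : |d| ≤ Λ)
    (hΦ : (u - b * w - d * √α * v + c * y) ^ 2 ≤ Φ) :
    -2 * (w * u) - 3 * Λ ^ 2 / m * (α * v ^ 2 + w * y) ≤
      (3 * Λ ^ 2 / m + (3 * Λ ^ 2 / m) ^ 2 / (2 * m)) * y ^ 2 + 3 / m * Φ -
        min (1 / M) (m / 2) * (u ^ 2 + w ^ 2) := by
  set k : ℝ := 3 * Λ ^ 2 / m
  have hresidual : (u - b * w) ^ 2 / m ≤ k * (α * v ^ 2) + k * y ^ 2 + 3 / m * Φ :=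
    (div_le_div_of_nonneg_right (sq_sub_mul_le_of_abs_le hα hc hd hΦ) hm.le).trans_eq
      (by simp only [k]; ring)
  have hyoung : -(k * (w * y)) ≤ m / 2 * w ^ 2 + k ^ 2 / (2 * m) * y ^ 2 := by
    have hsq : 0 ≤ (m * w + k * y) ^ 2 / (2 * m) := by positivity
    have hexpand : (m * w + k * y) ^ 2 / (2 * m) =
        m / 2 * w ^ 2 + k ^ 2 / (2 * m) * y ^ 2 + k * (w * y) := by field_simp; ring
    linarith
  have hu := mul_le_mul_of_nonneg_right (min_le_left (1 / M) (m / 2)) (sq_nonneg u)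
  have hw := mul_le_mul_of_nonneg_right (min_le_right (1 / M) (m / 2)) (sq_nonneg w)
  rw [one_div_mul_eq_div] at hu
  linarith [neg_two_mul_le_sq_sub_mul_div (u := u) (w := w) hm hb]

variable {a : ℝ → ℝ} {l r S m M Λ : ℝ} {b c d z zx zt w : ℝ → ℝ → ℝ} {Φ : ℝ × ℝ → ℝ}

lemma IsClassicalOn.energy_add_integral_le (hS : 0 < S) (hlr : l < r)
    (ha_cont : ContinuousOn a (Icc l r)) (ha : ∀ x ∈ Icc l r, 0 ≤ a x) (hm : 0 < m)
    (h : IsClassicalOn a l r (Icc 0 S) z zx zt w)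
    (hzt : MemLp (fun p : ℝ × ℝ ↦ zt p.1 p.2) 2 (volume.restrict (timeCylinder l r S)))
    (hw : MemLp (fun p : ℝ × ℝ ↦ w p.1 p.2) 2 (volume.restrict (timeCylinder l r S)))
    (hcoeff : ∀ x ∈ Ioo l r, ∀ t ∈ Ioo 0 S, b x t ∈ Icc m M ∧ |c x t| ≤ Λ ∧ |d x t| ≤ Λ)
    (hΦ_int : IntegrableOn Φ (timeCylinder l r S))
    (hΦ : ∀ x ∈ Ioo l r, ∀ t ∈ Ioo 0 S,
      (zt x t - b x t * w x t - d x t * √(a x) * zx x t + c x t * z x t) ^ 2 ≤ Φ (x, t)) :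
    energy a l r (fun x ↦ zx x S) +
        min (1 / M) (m / 2) * ∫ p in timeCylinder l r S, (zt p.1 p.2 ^ 2 + w p.1 p.2 ^ 2) ≤
      energy a l r (fun x ↦ zx x 0) + (3 * Λ ^ 2 / m + (3 * Λ ^ 2 / m) ^ 2 / (2 * m)) *
        (∫ p in timeCylinder l r S, z p.1 p.2 ^ 2) + 3 / m * ∫ p in timeCylinder l r S, Φ p := by
  set k : ℝ := 3 * Λ ^ 2 / m
  have hz := memLp_two_timeCylinder_of_continuousOn h.continuousOn
  have hwzt : IntegrableOn (fun p : ℝ × ℝ ↦ w p.1 p.2 * zt p.1 p.2) (timeCylinder l r S) :=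
    hw.integrable_mul hzt
  have hwz : IntegrableOn (fun p : ℝ × ℝ ↦ w p.1 p.2 * z p.1 p.2) (timeCylinder l r S) :=
    hw.integrable_mul hz
  have hax := h.integrableOn_mul_sq hlr ha_cont ha hw
  have hlower := (hz.integrable_sq.const_mul (k + k ^ 2 / (2 * m))).fun_add
    (hΦ_int.const_mul (3 / m))
  have hgain := (hzt.integrable_sq.fun_add hw.integrable_sq).const_mul (min (1 / M) (m / 2))
  have hmono := setIntegral_mono_on ((hwzt.const_mul (-2)).sub ((hax.fun_add hwz).const_mul k))
    (hlower.sub hgain) measurableSet_timeCylinder fun p hp ↦ by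
      obtain ⟨hb, hc, hd⟩ := hcoeff p.1 hp.1 p.2 hp.2
      exact neg_two_mul_sub_le hm hb (ha p.1 (Ioo_subset_Icc_self hp.1)) hc hd
        (hΦ p.1 hp.1 p.2 hp.2)
  simp only [Pi.sub_apply] at hmono
  rw [integral_sub (hwzt.const_mul (-2)) ((hax.fun_add hwz).const_mul k),
    integral_sub hlower hgain, integral_add (hz.integrable_sq.const_mul _) (hΦ_int.const_mul _),
    integral_const_mul, integral_const_mul, integral_const_mul, integral_const_mul,
    integral_const_mul, integral_add hax hwz,
    h.integral_mul_sq_eq_neg hlr ha_cont ha hw, neg_add_cancel, mul_zero, sub_zero] at hmono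
  linarith [h.energy_le hS hlr ha_cont ha hzt hw]

end ParabolicEstimate

section WeightedEstimate

variable {a ρ ρ' ρ₀ ρ₂ : ℝ → ℝ} {l r S m M R Λ : ℝ} {J J' : Set ℝ}
  {b c d f g z zx zt w : ℝ → ℝ → ℝ}

/-- A differentiable weight `ρ` whose square is dominated on `J`, up to the constant `R`, by those
of the weights `ρ₀` of the solution and `ρ₂` of the source, and whose derivative `ρ'` is dominated
in the same sense by `ρ₀`. -/
structure IsDominatedWeight (R : ℝ) (J : Set ℝ) (ρ ρ' ρ₀ ρ₂ : ℝ → ℝ) : Prop where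
  nonneg : 0 ≤ R
  hasDerivAt : ∀ t ∈ J, HasDerivAt ρ (ρ' t) t
  sq_le_left : ∀ t ∈ J, ρ t ^ 2 ≤ R * ρ₀ t ^ 2
  sq_le_right : ∀ t ∈ J, ρ t ^ 2 ≤ R * ρ₂ t ^ 2
  deriv_sq_le : ∀ t ∈ J, ρ' t ^ 2 ≤ R * ρ₀ t ^ 2

lemma IsDominatedWeight.mono (hρ : IsDominatedWeight R J ρ ρ' ρ₀ ρ₂) (hJ : J' ⊆ J) :
    IsDominatedWeight R J' ρ ρ' ρ₀ ρ₂ where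
  nonneg := hρ.nonneg
  hasDerivAt t ht := hρ.hasDerivAt t (hJ ht)
  sq_le_left t ht := hρ.sq_le_left t (hJ ht)
  sq_le_right t ht := hρ.sq_le_right t (hJ ht)
  deriv_sq_le t ht := hρ.deriv_sq_le t (hJ ht)

/-- The density `ρ² (z_t² + ((a z_x)_x)²)` controlled by the weighted estimate. -/
def weightedGain (ρ : ℝ → ℝ) (zt w : ℝ → ℝ → ℝ) (p : ℝ × ℝ) : ℝ :=
  ρ p.2 ^ 2 * (zt p.1 p.2 ^ 2 + w p.1 p.2 ^ 2)

/-- The density of the data of the weighted estimate: the solution `z`, the control `f` and the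
source `g`, with weights `ρ₀`, `ρ` and `ρ₂`. -/
def weightedData (ρ₀ ρ ρ₂ : ℝ → ℝ) (z f g : ℝ → ℝ → ℝ) (p : ℝ × ℝ) : ℝ :=
  ρ₀ p.2 ^ 2 * z p.1 p.2 ^ 2 + ρ p.2 ^ 2 * f p.1 p.2 ^ 2 + ρ₂ p.2 ^ 2 * g p.1 p.2 ^ 2

lemma weightedData_nonneg (ρ₀ ρ ρ₂ : ℝ → ℝ) (z f g : ℝ → ℝ → ℝ) (p : ℝ × ℝ) :
    0 ≤ weightedData ρ₀ ρ ρ₂ z f g p := by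
  unfold weightedData
  positivity

lemma sq_mul_le_of_sq_le {u v R : ℝ} (h : u ^ 2 ≤ R * v ^ 2) (y : ℝ) :
    (u * y) ^ 2 ≤ R * (v ^ 2 * y ^ 2) := by
  rw [mul_pow, ← mul_assoc]
  exact mul_le_mul_of_nonneg_right h (sq_nonneg y)

namespace IsDominatedWeight

lemma sq_mul_le_weightedData (hρ : IsDominatedWeight R J ρ ρ' ρ₀ ρ₂) {t : ℝ} (ht : t ∈ J)
    (x : ℝ) : (ρ t * z x t) ^ 2 ≤ R * weightedData ρ₀ ρ ρ₂ z f g (x, t) := by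
  refine (sq_mul_le_of_sq_le (hρ.sq_le_left t ht) _).trans
    (mul_le_mul_of_nonneg_left ?_ hρ.nonneg)
  rw [weightedData, add_assoc]
  exact le_add_of_nonneg_right (by positivity)

lemma sq_deriv_mul_le_weightedData (hρ : IsDominatedWeight R J ρ ρ' ρ₀ ρ₂) {t : ℝ} (ht : t ∈ J)
    (x : ℝ) : (ρ' t * z x t) ^ 2 ≤ R * weightedData ρ₀ ρ ρ₂ z f g (x, t) := by
  refine (sq_mul_le_of_sq_le (hρ.deriv_sq_le t ht) _).trans
    (mul_le_mul_of_nonneg_left ?_ hρ.nonneg)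
  rw [weightedData, add_assoc]
  exact le_add_of_nonneg_right (by positivity)

lemma sq_mul_add_add_le_weightedData (hρ : IsDominatedWeight R J ρ ρ' ρ₀ ρ₂) {t : ℝ} (ht : t ∈ J)
    (x : ℝ) : (ρ t * (f x t + g x t) + ρ' t * z x t) ^ 2 ≤
      3 * (1 + R) * weightedData ρ₀ ρ ρ₂ z f g (x, t) := by
  have hz := sq_mul_le_of_sq_le (hρ.deriv_sq_le t ht) (z x t)
  have hg := sq_mul_le_of_sq_le (hρ.sq_le_right t ht) (g x t)
  have hzero : 0 ≤ ρ₀ t ^ 2 * z x t ^ 2 + R * (ρ t ^ 2 * f x t ^ 2) + ρ₂ t ^ 2 * g x t ^ 2 := by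
    have := hρ.nonneg
    positivity
  simp only [weightedData]
  linarith [sq_nonneg (ρ t * f x t - ρ t * g x t), sq_nonneg (ρ t * f x t - ρ' t * z x t),
    sq_nonneg (ρ t * g x t - ρ' t * z x t)]

end IsDominatedWeight

namespace IsClassicalOn

lemma memLp_weighted_flux (ha_cont : ContinuousOn a (Icc l r))
    (h : IsClassicalOn a l r (Icc 0 S) z zx zt w)
    (hρ : IsDominatedWeight R (Icc 0 S) ρ ρ' ρ₀ ρ₂)
    (hgain : IntegrableOn (weightedGain ρ zt w) (timeCylinder l r S)) :
    MemLp (fun p : ℝ × ℝ ↦ ρ p.2 * w p.1 p.2) 2 (volume.restrict (timeCylinder l r S)) := by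
  have hmeas := (h.time_mul hρ.hasDerivAt).aestronglyMeasurable_flux ha_cont
  refine (memLp_two_iff_integrable_sq hmeas).2 (hgain.mono' (hmeas.pow 2) (ae_of_all _ fun p ↦ ?_))
  simp only [Real.norm_eq_abs, abs_sq, weightedGain]
  nlinarith [mul_nonneg (sq_nonneg (ρ p.2)) (sq_nonneg (zt p.1 p.2))]

lemma memLp_weighted_time (h : IsClassicalOn a l r (Icc 0 S) z zx zt w)
    (hρ : IsDominatedWeight R (Icc 0 S) ρ ρ' ρ₀ ρ₂)
    (hgain : IntegrableOn (weightedGain ρ zt w) (timeCylinder l r S))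
    (hdata : IntegrableOn (weightedData ρ₀ ρ ρ₂ z f g) (timeCylinder l r S)) :
    MemLp (fun p : ℝ × ℝ ↦ ρ' p.2 * z p.1 p.2 + ρ p.2 * zt p.1 p.2) 2
      (volume.restrict (timeCylinder l r S)) := by
  have hmeas := (h.time_mul hρ.hasDerivAt).aestronglyMeasurable_time
  refine (memLp_two_iff_integrable_sq hmeas).2 (((hgain.const_mul 2).fun_add
    (hdata.const_mul (2 * R))).mono' (hmeas.pow 2)
      (ae_restrict_of_forall_mem measurableSet_timeCylinder fun p hp ↦ ?_))
  have hz := hρ.sq_deriv_mul_le_weightedData (z := z) (f := f) (g := g)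
    (Ioo_subset_Icc_self hp.2) p.1
  simp only [Real.norm_eq_abs, abs_sq, weightedGain]
  nlinarith [sq_nonneg (ρ' p.2 * z p.1 p.2 - ρ p.2 * zt p.1 p.2),
    mul_nonneg (sq_nonneg (ρ p.2)) (sq_nonneg (w p.1 p.2))]

lemma integral_weightedGain_le (ha_cont : ContinuousOn a (Icc l r))
    (h : IsClassicalOn a l r (Icc 0 S) z zx zt w)
    (hρ : IsDominatedWeight R (Icc 0 S) ρ ρ' ρ₀ ρ₂)
    (hgain : IntegrableOn (weightedGain ρ zt w) (timeCylinder l r S))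
    (hdata : IntegrableOn (weightedData ρ₀ ρ ρ₂ z f g) (timeCylinder l r S)) :
    ∫ p in timeCylinder l r S, weightedGain ρ zt w p ≤
      2 * (∫ p in timeCylinder l r S, ((ρ' p.2 * z p.1 p.2 + ρ p.2 * zt p.1 p.2) ^ 2 +
        (ρ p.2 * w p.1 p.2) ^ 2)) +
      2 * R * ∫ p in timeCylinder l r S, weightedData ρ₀ ρ ρ₂ z f g p := by
  have hsq := (h.memLp_weighted_time hρ hgain hdata).integrable_sq.fun_add
    (h.memLp_weighted_flux ha_cont hρ hgain).integrable_sq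
  rw [← integral_const_mul, ← integral_const_mul,
    ← integral_add (hsq.const_mul 2) (hdata.const_mul (2 * R))]
  refine setIntegral_mono_on hgain ((hsq.const_mul 2).fun_add (hdata.const_mul (2 * R)))
    measurableSet_timeCylinder fun p hp ↦ ?_
  have hz := hρ.sq_deriv_mul_le_weightedData (z := z) (f := f) (g := g)
    (Ioo_subset_Icc_self hp.2) p.1
  simp only [weightedGain]
  nlinarith [sq_nonneg (2 * (ρ' p.2 * z p.1 p.2) + ρ p.2 * zt p.1 p.2),
    mul_nonneg (sq_nonneg (ρ p.2)) (sq_nonneg (w p.1 p.2))]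

end IsClassicalOn

/-- The constant in front of the data in the weighted estimate. The factors of `R` come from
trading `ρ z` and `ρ' z` for `ρ₀ z`, and `ρ g` for `ρ₂ g`. -/
noncomputable def weightedConst (m M Λ R : ℝ) : ℝ :=
  (min (1 / M) (m / 2) + 3 * Λ ^ 2 / m + (3 * Λ ^ 2 / m) ^ 2 / (2 * m)) * R + 9 / m * (1 + R)

lemma weightedConst_pos (hm : 0 < m) (hM : 0 < M) (hR : 0 ≤ R) : 0 < weightedConst m M Λ R := by
  unfold weightedConst
  positivity

-- `ρ z` solves the same equation with right-hand side `ρ (f + g) + ρ' z`.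
lemma IsClassicalOn.weighted_energy_add_integral_le (hS : 0 < S) (hlr : l < r)
    (ha_cont : ContinuousOn a (Icc l r)) (ha : ∀ x ∈ Icc l r, 0 ≤ a x) (hm : 0 < m) (hM : 0 < M)
    (h : IsClassicalOn a l r (Icc 0 S) z zx zt w)
    (hρ : IsDominatedWeight R (Icc 0 S) ρ ρ' ρ₀ ρ₂)
    (hcoeff : ∀ x ∈ Ioo l r, ∀ t ∈ Ioo 0 S, b x t ∈ Icc m M ∧ |c x t| ≤ Λ ∧ |d x t| ≤ Λ)
    (heq : ∀ x ∈ Ioo l r, ∀ t ∈ Ioo 0 S,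
      zt x t - b x t * w x t - d x t * √(a x) * zx x t + c x t * z x t = f x t + g x t)
    (hgain : IntegrableOn (weightedGain ρ zt w) (timeCylinder l r S))
    (hdata : IntegrableOn (weightedData ρ₀ ρ ρ₂ z f g) (timeCylinder l r S)) :
    ρ S ^ 2 * energy a l r (fun x ↦ zx x S) +
        min (1 / M) (m / 2) / 2 * ∫ p in timeCylinder l r S, weightedGain ρ zt w p ≤
      ρ 0 ^ 2 * energy a l r (fun x ↦ zx x 0) +
        weightedConst m M Λ R * ∫ p in timeCylinder l r S, weightedData ρ₀ ρ ρ₂ z f g p := by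
  have hy := h.time_mul hρ.hasDerivAt
  have hmain := hy.energy_add_integral_le hS hlr ha_cont ha hm
    (h.memLp_weighted_time hρ hgain hdata) (h.memLp_weighted_flux ha_cont hρ hgain) hcoeff
    (hdata.const_mul (3 * (1 + R))) fun x hx t ht ↦ by
      refine le_trans (le_of_eq ?_)
        (hρ.sq_mul_add_add_le_weightedData (Ioo_subset_Icc_self ht) x)
      rw [← heq x hx t ht]
      ring
  rw [energy_const_mul, energy_const_mul, integral_const_mul] at hmain
  have hsol : ∫ p in timeCylinder l r S, (ρ p.2 * z p.1 p.2) ^ 2 ≤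
      R * ∫ p in timeCylinder l r S, weightedData ρ₀ ρ ρ₂ z f g p := by
    rw [← integral_const_mul]
    exact setIntegral_mono_on
      (memLp_two_timeCylinder_of_continuousOn hy.continuousOn).integrable_sq (hdata.const_mul R)
      measurableSet_timeCylinder fun p hp ↦
        hρ.sq_mul_le_weightedData (Ioo_subset_Icc_self hp.2) p.1
  have hgain_le := mul_le_mul_of_nonneg_left (h.integral_weightedGain_le ha_cont hρ hgain hdata)
    (show 0 ≤ min (1 / M) (m / 2) / 2 by positivity)
  have hsol_le := mul_le_mul_of_nonneg_left hsol
    (show 0 ≤ 3 * Λ ^ 2 / m + (3 * Λ ^ 2 / m) ^ 2 / (2 * m) by positivity)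
  rw [weightedConst]
  linear_combination hmain + hgain_le + hsol_le

end WeightedEstimate

section CarlemanWeights

variable {s K₁ K₂ τ₀ ζ₀ C₃ t : ℝ} {τ τ' : ℝ → ℝ}

lemma rho1_eq_rho0_mul : rho1 s K₁ K₂ τ t = rho0 s K₁ τ t * (K₂ * τ t) ^ (-(3 : ℝ) / 2) := rfl

lemma rho0_nonneg : 0 ≤ rho0 s K₁ τ t := (Real.exp_pos _).le

lemma rho1_nonneg (hK₂ : 0 ≤ K₂) (hτ : 0 ≤ τ t) : 0 ≤ rho1 s K₁ K₂ τ t := by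
  unfold rho1
  positivity

lemma hasDerivAt_rho1 (hK₂ : 0 < K₂) (hτ : 0 < τ t) (hτ' : HasDerivAt τ (τ' t) t) :
    HasDerivAt (rho1 s K₁ K₂ τ) ((s * -K₁ - 3 / 2 / τ t) * τ' t * rho1 s K₁ K₂ τ t) t := by
  have hpow := (hτ'.const_mul K₂).rpow_const (p := -(3 : ℝ) / 2) (Or.inl (by positivity))
  have hexp : HasDerivAt (fun u ↦ Real.exp (-(s * (K₁ * τ u))))
      (Real.exp (-(s * (K₁ * τ t))) * -(s * (K₁ * τ' t))) t :=
    ((hτ'.const_mul K₁).const_mul s).neg.exp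
  refine (hexp.mul hpow).congr_deriv ?_
  rw [Real.rpow_sub_one (by positivity), rho1]
  field_simp
  ring

lemma rho1_le_rho0 (hK₂ : 0 < K₂) (hτ₀ : 0 < τ₀) (hτ : τ₀ ≤ τ t) :
    rho1 s K₁ K₂ τ t ≤ (K₂ * τ₀) ^ (-(3 : ℝ) / 2) * rho0 s K₁ τ t := by
  rw [rho1_eq_rho0_mul, mul_comm]
  refine mul_le_mul_of_nonneg_right ?_ rho0_nonneg
  exact Real.rpow_le_rpow_of_nonpos (by positivity) (by gcongr) (by norm_num)

lemma rho1_le_rho2 (hs : 0 ≤ s) (hK₁ : K₁ ≤ 0) (hK₂ : 0 < K₂) (hτ₀ : 0 < τ₀) (hζ₀ : 1 ≤ ζ₀)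
    (hτ : τ₀ ≤ τ t) :
    rho1 s K₁ K₂ τ t ≤ (K₂ * τ₀) ^ (-(1 : ℝ) / 2) * rho2 s K₁ K₂ ζ₀ τ t := by
  have hτt : 0 < τ t := hτ₀.trans_le hτ
  have hexp : Real.exp (-(s * (K₁ * τ t))) ≤ Real.exp (-(3 * s * (K₁ * τ t) / 2)) :=
    Real.exp_le_exp.2 (by
      linarith [mul_nonpos_of_nonneg_of_nonpos hs (mul_nonpos_of_nonpos_of_nonneg hK₁ hτt.le)])
  have hpow : (K₂ * τ t) ^ (-(1 : ℝ) / 2) ≤ (K₂ * τ₀) ^ (-(1 : ℝ) / 2) :=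
    Real.rpow_le_rpow_of_nonpos (by positivity) (by gcongr) (by norm_num)
  have hinv : (K₂ * τ t)⁻¹ ≤ (K₂ * τ t / ζ₀)⁻¹ :=
    inv_anti₀ (by positivity) (div_le_self (by positivity) hζ₀)
  calc rho1 s K₁ K₂ τ t
      = (K₂ * τ t) ^ (-(1 : ℝ) / 2) * (Real.exp (-(s * (K₁ * τ t))) * (K₂ * τ t)⁻¹) := by
        rw [rho1, show -(3 : ℝ) / 2 = -(1 : ℝ) / 2 - 1 by norm_num,
          Real.rpow_sub_one (by positivity)]
        ring
    _ ≤ (K₂ * τ₀) ^ (-(1 : ℝ) / 2) * rho2 s K₁ K₂ ζ₀ τ t := by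
        unfold rho2
        gcongr

/-- The constant in `|ρ₁'| ≤ C ρ₀`. -/
noncomputable def rho1DerivConst (s K₁ K₂ τ₀ C₃ : ℝ) : ℝ :=
  (s * -K₁ + 3 / 2 / τ₀) * C₃ * (K₂ ^ (-(3 : ℝ) / 2) * τ₀ ^ (-(1 : ℝ) / 4))

-- The growth `τ ^ (5/4)` of `τ'` is beaten by the factor `τ ^ (-3/2)` of `ρ₁`.
lemma abs_deriv_rho1_le_rho0 (hs : 0 ≤ s) (hK₁ : K₁ ≤ 0) (hK₂ : 0 < K₂) (hτ₀ : 0 < τ₀)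
    (hC₃ : 0 ≤ C₃) (hτ : τ₀ ≤ τ t) (hτ' : |τ' t| ≤ C₃ * τ t ^ ((5 : ℝ) / 4)) :
    |(s * -K₁ - 3 / 2 / τ t) * τ' t * rho1 s K₁ K₂ τ t| ≤
      rho1DerivConst s K₁ K₂ τ₀ C₃ * rho0 s K₁ τ t := by
  have hτt : 0 < τ t := hτ₀.trans_le hτ
  have hsK : 0 ≤ s * -K₁ := mul_nonneg hs (neg_nonneg.2 hK₁)
  have hcoeff : |s * -K₁ - 3 / 2 / τ t| ≤ s * -K₁ + 3 / 2 / τ₀ := by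
    have hle : 3 / 2 / τ t ≤ 3 / 2 / τ₀ := by gcongr
    have hpos : 0 < 3 / 2 / τ t := by positivity
    exact abs_le.2 ⟨by linarith, by linarith⟩
  have hpow : τ t ^ ((5 : ℝ) / 4) * τ t ^ (-(3 : ℝ) / 2) ≤ τ₀ ^ (-(1 : ℝ) / 4) := by
    rw [← Real.rpow_add hτt, show (5 : ℝ) / 4 + -(3 : ℝ) / 2 = -(1 : ℝ) / 4 by norm_num]
    exact Real.rpow_le_rpow_of_nonpos hτ₀ hτ (by norm_num)
  have hrho0 : 0 ≤ rho0 s K₁ τ t := rho0_nonneg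
  rw [abs_mul, abs_mul, abs_of_nonneg (rho1_nonneg hK₂.le hτt.le), rho1_eq_rho0_mul,
    rho1DerivConst]
  calc |s * -K₁ - 3 / 2 / τ t| * |τ' t| * (rho0 s K₁ τ t * (K₂ * τ t) ^ (-(3 : ℝ) / 2))
      ≤ (s * -K₁ + 3 / 2 / τ₀) * (C₃ * τ t ^ ((5 : ℝ) / 4)) *
          (rho0 s K₁ τ t * (K₂ * τ t) ^ (-(3 : ℝ) / 2)) := by gcongr
    _ = (s * -K₁ + 3 / 2 / τ₀) * C₃ * (K₂ ^ (-(3 : ℝ) / 2) *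
          (τ t ^ ((5 : ℝ) / 4) * τ t ^ (-(3 : ℝ) / 2))) * rho0 s K₁ τ t := by
        rw [Real.mul_rpow hK₂.le hτt.le]
        ring
    _ ≤ (s * -K₁ + 3 / 2 / τ₀) * C₃ * (K₂ ^ (-(3 : ℝ) / 2) * τ₀ ^ (-(1 : ℝ) / 4)) *
          rho0 s K₁ τ t := by gcongr

lemma sq_le_mul_sq_of_abs_le {u v k R : ℝ} (h : |u| ≤ k * v) (hR : k ^ 2 ≤ R) :
    u ^ 2 ≤ R * v ^ 2 :=
  calc u ^ 2 ≤ (k * v) ^ 2 := sq_le_sq.2 (h.trans (le_abs_self _))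
    _ = k ^ 2 * v ^ 2 := mul_pow k v 2
    _ ≤ R * v ^ 2 := mul_le_mul_of_nonneg_right hR (sq_nonneg v)

lemma exists_isDominatedWeight_rho1 {J : Set ℝ} (hs : 0 ≤ s) (hK₁ : K₁ ≤ 0) (hK₂ : 0 < K₂)
    (hτ₀ : 0 < τ₀) (hζ₀ : 1 ≤ ζ₀) (hC₃ : 0 ≤ C₃) (hτ' : ∀ t ∈ J, HasDerivAt τ (τ' t) t)
    (hτ_ge : ∀ t ∈ J, τ₀ ≤ τ t) (hτ'_le : ∀ t ∈ J, |τ' t| ≤ C₃ * τ t ^ ((5 : ℝ) / 4)) :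
    ∃ (R : ℝ) (ρ' : ℝ → ℝ),
      IsDominatedWeight R J (rho1 s K₁ K₂ τ) ρ' (rho0 s K₁ τ) (rho2 s K₁ K₂ ζ₀ τ) := by
  have habs : ∀ t ∈ J, |rho1 s K₁ K₂ τ t| = rho1 s K₁ K₂ τ t := fun t ht ↦
    abs_of_nonneg (rho1_nonneg hK₂.le (hτ₀.trans_le (hτ_ge t ht)).le)
  obtain ⟨R₀, hR₀⟩ : ∃ R, ∀ t ∈ J, |rho1 s K₁ K₂ τ t| ≤ R * rho0 s K₁ τ t :=
    ⟨_, fun t ht ↦ (habs t ht).trans_le (rho1_le_rho0 hK₂ hτ₀ (hτ_ge t ht))⟩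
  obtain ⟨R₂, hR₂⟩ : ∃ R, ∀ t ∈ J, |rho1 s K₁ K₂ τ t| ≤ R * rho2 s K₁ K₂ ζ₀ τ t :=
    ⟨_, fun t ht ↦ (habs t ht).trans_le (rho1_le_rho2 hs hK₁ hK₂ hτ₀ hζ₀ (hτ_ge t ht))⟩
  obtain ⟨R₁, hR₁⟩ : ∃ R, ∀ t ∈ J,
      |(s * -K₁ - 3 / 2 / τ t) * τ' t * rho1 s K₁ K₂ τ t| ≤ R * rho0 s K₁ τ t :=
    ⟨_, fun t ht ↦
      abs_deriv_rho1_le_rho0 hs hK₁ hK₂ hτ₀ hC₃ (hτ_ge t ht) (hτ'_le t ht)⟩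
  exact ⟨R₀ ^ 2 + R₁ ^ 2 + R₂ ^ 2, _, by positivity,
    fun t ht ↦ hasDerivAt_rho1 hK₂ (hτ₀.trans_le (hτ_ge t ht)) (hτ' t ht),
    fun t ht ↦ sq_le_mul_sq_of_abs_le (hR₀ t ht) (by linarith [sq_nonneg R₁, sq_nonneg R₂]),
    fun t ht ↦ sq_le_mul_sq_of_abs_le (hR₂ t ht) (by linarith [sq_nonneg R₀, sq_nonneg R₁]),
    fun t ht ↦ sq_le_mul_sq_of_abs_le (hR₁ t ht) (by linarith [sq_nonneg R₀, sq_nonneg R₂])⟩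

end CarlemanWeights

section Control

variable {ρ ρ₀ ρ₂ : ℝ → ℝ} {l r T : ℝ} {ω : Set ℝ}
  {z h g : ℝ → ℝ → ℝ}

lemma prod_univ_inter_timeCylinder (hω : ω ⊆ Ioo l r) :
    (ω ×ˢ univ) ∩ timeCylinder l r T = ω ×ˢ Ioo 0 T := by
  rw [timeCylinder, prod_inter_prod, univ_inter, inter_eq_left.2 hω]

variable [DecidablePred (· ∈ ω)]

lemma mul_sq_ite_eq_indicator :
    (fun p : ℝ × ℝ ↦ ρ p.2 ^ 2 * (if p.1 ∈ ω then h p.1 p.2 else 0) ^ 2) =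
      (ω ×ˢ univ).indicator fun p ↦ ρ p.2 ^ 2 * h p.1 p.2 ^ 2 := by
  ext p
  by_cases hp : p.1 ∈ ω <;> simp [indicator, hp]

lemma integrableOn_mul_sq_ite (hω_meas : MeasurableSet ω) (hω : ω ⊆ Ioo l r)
    (hh : IntegrableOn (fun p : ℝ × ℝ ↦ ρ p.2 ^ 2 * h p.1 p.2 ^ 2) (ω ×ˢ Ioo 0 T)) :
    IntegrableOn (fun p : ℝ × ℝ ↦ ρ p.2 ^ 2 * (if p.1 ∈ ω then h p.1 p.2 else 0) ^ 2)
      (timeCylinder l r T) := by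
  rwa [mul_sq_ite_eq_indicator, IntegrableOn,
    integrable_indicator_iff (hω_meas.prod MeasurableSet.univ), IntegrableOn,
    Measure.restrict_restrict (hω_meas.prod MeasurableSet.univ), prod_univ_inter_timeCylinder hω]

lemma integral_mul_sq_ite (hω_meas : MeasurableSet ω) (hω : ω ⊆ Ioo l r) :
    ∫ p in timeCylinder l r T, ρ p.2 ^ 2 * (if p.1 ∈ ω then h p.1 p.2 else 0) ^ 2 =
      ∫ p in ω ×ˢ Ioo 0 T, ρ p.2 ^ 2 * h p.1 p.2 ^ 2 := by
  rw [mul_sq_ite_eq_indicator, integral_indicator (hω_meas.prod MeasurableSet.univ),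
    Measure.restrict_restrict (hω_meas.prod MeasurableSet.univ), prod_univ_inter_timeCylinder hω]

lemma integrableOn_weightedData_ite (hω_meas : MeasurableSet ω) (hω : ω ⊆ Ioo l r)
    (hz : IntegrableOn (fun p : ℝ × ℝ ↦ ρ₀ p.2 ^ 2 * z p.1 p.2 ^ 2) (timeCylinder l r T))
    (hh : IntegrableOn (fun p : ℝ × ℝ ↦ ρ p.2 ^ 2 * h p.1 p.2 ^ 2) (ω ×ˢ Ioo 0 T))
    (hg : IntegrableOn (fun p : ℝ × ℝ ↦ ρ₂ p.2 ^ 2 * g p.1 p.2 ^ 2) (timeCylinder l r T)) :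
    IntegrableOn (weightedData ρ₀ ρ ρ₂ z (fun x t ↦ if x ∈ ω then h x t else 0) g)
      (timeCylinder l r T) :=
  (hz.fun_add (integrableOn_mul_sq_ite hω_meas hω hh)).fun_add hg

lemma integral_weightedData_ite (hω_meas : MeasurableSet ω) (hω : ω ⊆ Ioo l r)
    (hz : IntegrableOn (fun p : ℝ × ℝ ↦ ρ₀ p.2 ^ 2 * z p.1 p.2 ^ 2) (timeCylinder l r T))
    (hh : IntegrableOn (fun p : ℝ × ℝ ↦ ρ p.2 ^ 2 * h p.1 p.2 ^ 2) (ω ×ˢ Ioo 0 T))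
    (hg : IntegrableOn (fun p : ℝ × ℝ ↦ ρ₂ p.2 ^ 2 * g p.1 p.2 ^ 2) (timeCylinder l r T)) :
    ∫ p in timeCylinder l r T,
        weightedData ρ₀ ρ ρ₂ z (fun x t ↦ if x ∈ ω then h x t else 0) g p =
      (∫ p in timeCylinder l r T, ρ₀ p.2 ^ 2 * z p.1 p.2 ^ 2) +
        (∫ p in ω ×ˢ Ioo 0 T, ρ p.2 ^ 2 * h p.1 p.2 ^ 2) +
        ∫ p in timeCylinder l r T, ρ₂ p.2 ^ 2 * g p.1 p.2 ^ 2 := by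
  have hh' := integrableOn_mul_sq_ite hω_meas hω hh
  simp only [weightedData]
  rw [integral_add (hz.fun_add hh') hg, integral_add hz hh', integral_mul_sq_ite hω_meas hω]

end Control

section FinalTime

variable {a ρ ρ' ρ₀ ρ₂ : ℝ → ℝ} {l r T m M R Λ : ℝ} {b c d f g z zx zt w : ℝ → ℝ → ℝ}

lemma timeCylinder_mono {S : ℝ} (hS : S ≤ T) : timeCylinder l r S ⊆ timeCylinder l r T :=
  prod_mono_right (Ioo_subset_Ioo_right hS)

lemma setIntegral_timeCylinder_le {F : ℝ × ℝ → ℝ} {B : ℝ} (hT : 0 < T)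
    (hF : IntegrableOn F (timeCylinder l r T))
    (hB : ∀ S ∈ Ioo 0 T, ∫ p in timeCylinder l r S, F p ≤ B) :
    ∫ p in timeCylinder l r T, F p ≤ B := by
  obtain ⟨u, hu_mono, hu_mem, hu_tendsto⟩ := exists_seq_strictMono_tendsto' hT
  have hUnion : ⋃ n, timeCylinder l r (u n) = timeCylinder l r T := by
    refine subset_antisymm (iUnion_subset fun n ↦ timeCylinder_mono (hu_mem n).2.le) fun p hp ↦ ?_
    obtain ⟨n, hn⟩ := (hu_tendsto.eventually_const_lt hp.2.2).exists
    exact mem_iUnion.2 ⟨n, hp.1, hp.2.1, hn⟩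
  have hlim := tendsto_setIntegral_of_monotone (μ := volume) (f := F)
    (fun n ↦ measurableSet_timeCylinder) (fun i j hij ↦ timeCylinder_mono (hu_mono.monotone hij))
    (hUnion ▸ hF)
  rw [hUnion] at hlim
  exact le_of_tendsto' hlim fun n ↦ hB (u n) (hu_mem n)

namespace IsClassicalOn

lemma weighted_energy_add_integral_le_of_lt (hlr : l < r) (ha_cont : ContinuousOn a (Icc l r))
    (ha : ∀ x ∈ Icc l r, 0 ≤ a x) (hm : 0 < m) (hM : 0 < M)
    (h : IsClassicalOn a l r (Ico 0 T) z zx zt w) (hρ : IsDominatedWeight R (Ico 0 T) ρ ρ' ρ₀ ρ₂)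
    (hcoeff : ∀ x ∈ Ioo l r, ∀ t ∈ Ioo 0 T, b x t ∈ Icc m M ∧ |c x t| ≤ Λ ∧ |d x t| ≤ Λ)
    (heq : ∀ x ∈ Ioo l r, ∀ t ∈ Ioo 0 T,
      zt x t - b x t * w x t - d x t * √(a x) * zx x t + c x t * z x t = f x t + g x t)
    (hgain : IntegrableOn (weightedGain ρ zt w) (timeCylinder l r T))
    (hdata : IntegrableOn (weightedData ρ₀ ρ ρ₂ z f g) (timeCylinder l r T))
    {S : ℝ} (hS : S ∈ Ioo 0 T) :
    ρ S ^ 2 * energy a l r (fun x ↦ zx x S) +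
        min (1 / M) (m / 2) / 2 * ∫ p in timeCylinder l r S, weightedGain ρ zt w p ≤
      ρ 0 ^ 2 * energy a l r (fun x ↦ zx x 0) +
        weightedConst m M Λ R * ∫ p in timeCylinder l r T, weightedData ρ₀ ρ ρ₂ z f g p := by
  have hJ : Icc 0 S ⊆ Ico 0 T := Icc_subset_Ico_right hS.2
  have hJ' : Ioo 0 S ⊆ Ioo 0 T := Ioo_subset_Ioo_right hS.2.le
  have hQ : timeCylinder l r S ⊆ timeCylinder l r T := timeCylinder_mono hS.2.le
  refine ((h.mono hJ).weighted_energy_add_integral_le hS.1 hlr ha_cont ha hm hM (hρ.mono hJ)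
    (fun x hx t ht ↦ hcoeff x hx t (hJ' ht)) (fun x hx t ht ↦ heq x hx t (hJ' ht))
    (hgain.mono_set hQ) (hdata.mono_set hQ)).trans (add_le_add_right
      (mul_le_mul_of_nonneg_left ?_ (weightedConst_pos hm hM hρ.nonneg).le) _)
  exact setIntegral_mono_set hdata (ae_of_all _ (weightedData_nonneg ρ₀ ρ ρ₂ z f g))
    hQ.eventuallyLE

lemma weighted_energy_add_integral_le_full (hlr : l < r) (ha_cont : ContinuousOn a (Icc l r))
    (ha : ∀ x ∈ Icc l r, 0 ≤ a x) (hm : 0 < m) (hM : 0 < M)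
    (h : IsClassicalOn a l r (Ico 0 T) z zx zt w) (hρ : IsDominatedWeight R (Ico 0 T) ρ ρ' ρ₀ ρ₂)
    (hcoeff : ∀ x ∈ Ioo l r, ∀ t ∈ Ioo 0 T, b x t ∈ Icc m M ∧ |c x t| ≤ Λ ∧ |d x t| ≤ Λ)
    (heq : ∀ x ∈ Ioo l r, ∀ t ∈ Ioo 0 T,
      zt x t - b x t * w x t - d x t * √(a x) * zx x t + c x t * z x t = f x t + g x t)
    (hgain : IntegrableOn (weightedGain ρ zt w) (timeCylinder l r T))
    (hdata : IntegrableOn (weightedData ρ₀ ρ ρ₂ z f g) (timeCylinder l r T))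
    {t : ℝ} (ht : t ∈ Ico 0 T) :
    ρ t ^ 2 * energy a l r (fun x ↦ zx x t) +
        ∫ p in timeCylinder l r T, weightedGain ρ zt w p ≤
      (1 + (min (1 / M) (m / 2) / 2)⁻¹) * (ρ 0 ^ 2 * energy a l r (fun x ↦ zx x 0) +
        weightedConst m M Λ R * ∫ p in timeCylinder l r T, weightedData ρ₀ ρ ρ₂ z f g p) := by
  have hκ : 0 < min (1 / M) (m / 2) / 2 := by positivity
  have hlt := fun S (hS : S ∈ Ioo 0 T) ↦
    h.weighted_energy_add_integral_le_of_lt hlr ha_cont ha hm hM hρ hcoeff heq hgain hdata hS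
  have hgain_nonneg : ∀ S, 0 ≤ ∫ p in timeCylinder l r S, weightedGain ρ zt w p := fun S ↦
    integral_nonneg fun p ↦ by unfold weightedGain; positivity
  have hdata_nonneg : 0 ≤ ∫ p in timeCylinder l r T, weightedData ρ₀ ρ ρ₂ z f g p :=
    integral_nonneg (weightedData_nonneg ρ₀ ρ ρ₂ z f g)
  have henergy : ρ t ^ 2 * energy a l r (fun x ↦ zx x t) ≤
      ρ 0 ^ 2 * energy a l r (fun x ↦ zx x 0) +
        weightedConst m M Λ R * ∫ p in timeCylinder l r T, weightedData ρ₀ ρ ρ₂ z f g p := by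
    rcases ht.1.eq_or_lt with rfl | ht0
    · exact le_add_of_nonneg_right
        (mul_nonneg (weightedConst_pos hm hM hρ.nonneg).le hdata_nonneg)
    · exact (le_add_of_nonneg_right (mul_nonneg hκ.le (hgain_nonneg t))).trans (hlt t ⟨ht0, ht.2⟩)
  have hgain_le := setIntegral_timeCylinder_le (ht.1.trans_lt ht.2) hgain fun S hS ↦
    (le_inv_mul_iff₀ hκ).2 ((le_add_of_nonneg_left
      (mul_nonneg (sq_nonneg (ρ S)) (energy_nonneg ha _))).trans (hlt S hS))
  linarith

lemma energy_eq_of_hasDerivAt {J : Set ℝ} {z₀ z₀' : ℝ → ℝ} {t : ℝ}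
    (h : IsClassicalOn a l r J z zx zt w) (ht : t ∈ J) (hz : ∀ x ∈ Ioo l r, z x t = z₀ x)
    (hz₀ : ∀ x ∈ Ioo l r, HasDerivAt z₀ (z₀' x) x) :
    energy a l r (fun x ↦ zx x t) = energy a l r z₀' := by
  refine setIntegral_congr_fun measurableSet_Ioo fun x hx ↦ ?_
  have hz_nhds : (fun v ↦ z v t) =ᶠ[𝓝 x] z₀ := eventually_of_mem (isOpen_Ioo.mem_nhds hx) hz
  have hzx : zx x t = z₀' x :=
    (h.hasDerivAt_space x hx t ht).unique ((hz₀ x hx).congr_of_eventuallyEq hz_nhds)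
  simp only [hzx]

end IsClassicalOn

theorem second_weighted_energy_estimate_general (hlr : l < r) (ha_cont : ContinuousOn a (Icc l r))
    (ha : ∀ x ∈ Icc l r, 0 ≤ a x) (hm : 0 < m) (hM : 0 < M) (Λ : ℝ)
    (hρ : IsDominatedWeight R (Ico 0 T) ρ ρ' ρ₀ ρ₂) {ω : Set ℝ} [DecidablePred (· ∈ ω)]
    (hω_meas : MeasurableSet ω) (hω : ω ⊆ Ioo l r) :
    ∃ C > 0, ∀ (b c d z zx zt w h g : ℝ → ℝ → ℝ) (z₀ z₀' : ℝ → ℝ),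
      IsClassicalOn a l r (Ico 0 T) z zx zt w →
      (∀ x ∈ Ioo l r, ∀ t ∈ Ioo 0 T, b x t ∈ Icc m M ∧ |c x t| ≤ Λ ∧ |d x t| ≤ Λ) →
      (∀ x ∈ Ioo l r, ∀ t ∈ Ioo 0 T,
        zt x t - b x t * w x t - d x t * √(a x) * zx x t + c x t * z x t =
          (if x ∈ ω then h x t else 0) + g x t) →
      (∀ x ∈ Ioo l r, z x 0 = z₀ x) →
      (∀ x ∈ Ioo l r, HasDerivAt z₀ (z₀' x) x) →
      IntegrableOn (weightedGain ρ zt w) (timeCylinder l r T) →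
      IntegrableOn (fun p : ℝ × ℝ ↦ ρ₀ p.2 ^ 2 * z p.1 p.2 ^ 2) (timeCylinder l r T) →
      IntegrableOn (fun p : ℝ × ℝ ↦ ρ p.2 ^ 2 * h p.1 p.2 ^ 2) (ω ×ˢ Ioo 0 T) →
      IntegrableOn (fun p : ℝ × ℝ ↦ ρ₂ p.2 ^ 2 * g p.1 p.2 ^ 2) (timeCylinder l r T) →
      ∀ t ∈ Ico 0 T,
        ρ t ^ 2 * energy a l r (fun x ↦ zx x t) +
            ∫ p in timeCylinder l r T, weightedGain ρ zt w p ≤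
          C * ((∫ p in timeCylinder l r T, ρ₀ p.2 ^ 2 * z p.1 p.2 ^ 2) +
            (∫ p in ω ×ˢ Ioo 0 T, ρ p.2 ^ 2 * h p.1 p.2 ^ 2) +
            (∫ p in timeCylinder l r T, ρ₂ p.2 ^ 2 * g p.1 p.2 ^ 2) + energy a l r z₀') := by
  have hK := weightedConst_pos (Λ := Λ) hm hM hρ.nonneg
  refine ⟨(1 + (min (1 / M) (m / 2) / 2)⁻¹) * (ρ 0 ^ 2 + weightedConst m M Λ R), by positivity,
    fun b c d z zx zt w h g z₀ z₀' hz hcoeff heq hz_zero hz₀ hgain hIz hIh hIg t ht ↦ ?_⟩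
  have hdata_nonneg : 0 ≤ ∫ p in timeCylinder l r T,
      weightedData ρ₀ ρ ρ₂ z (fun x t ↦ if x ∈ ω then h x t else 0) g p :=
    integral_nonneg fun p ↦ weightedData_nonneg ρ₀ ρ ρ₂ z _ g p
  have henergy_nonneg : 0 ≤ energy a l r z₀' := energy_nonneg ha z₀'
  have hmain := hz.weighted_energy_add_integral_le_full hlr ha_cont ha hm hM hρ hcoeff heq hgain
    (integrableOn_weightedData_ite hω_meas hω hIz hIh hIg) ht
  rw [hz.energy_eq_of_hasDerivAt (left_mem_Ico.2 (ht.1.trans_lt ht.2)) hz_zero hz₀] at hmain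
  rw [← integral_weightedData_ite hω_meas hω hIz hIh hIg, mul_assoc]
  refine hmain.trans (mul_le_mul_of_nonneg_left ?_ (by positivity))
  nlinarith [mul_nonneg (sq_nonneg (ρ 0)) hdata_nonneg, mul_nonneg hK.le henergy_nonneg]

end FinalTime

/-- Second additional weighted energy estimate for classical solutions of the linearized
degenerate parabolic system `z_t − b(t)(a z_x)_x − d₁ √a z_x + c₁ z = h̃ 1_{ω₁} + G` on
`(0,1) × (0,T)` with Dirichlet boundary conditions and initial data `z₀ ∈ H¹_a(0,1)`:
`sup_t ρ₁² ∫ a z_x² + ∫∫ ρ₁² (z_t² + ((a z_x)_x)²)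
  ≤ C (∫∫ ρ₀² z² + ∫∫_{ω₁} ρ₁² h̃² + ∫∫ ρ₂² G² + ∫ z₀² + ∫ a z₀'²)`,
with `C` depending only on `T`, `m`, `M`, `Λ` and the weight constants. -/
theorem second_weighted_energy_estimate
    (T : ℝ) (hT : 0 < T)
    (a a' : ℝ → ℝ)
    (ha_cont : ContinuousOn a (Icc 0 1))
    (ha_nonneg : ∀ x ∈ Icc (0:ℝ) 1, 0 ≤ a x)
    (ha_deriv : ∀ x ∈ Ioc (0:ℝ) 1, HasDerivAt a (a' x) x)
    (ha'_cont : ContinuousOn a' (Ioc 0 1))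
    (m M Λ : ℝ) (hm : 0 < m) (hmM : m ≤ M) (hΛ : 0 < Λ)
    (s K₁ K₂ τ₀ ζ₀ C₃ : ℝ) (hs : 0 < s) (hK₁ : K₁ < 0) (hK₂ : 0 < K₂)
    (hτ₀ : 0 < τ₀) (hζ₀ : 1 ≤ ζ₀) (hC₃ : 0 < C₃)
    (τ τ' : ℝ → ℝ)
    (hτ_deriv : ∀ t ∈ Ico (0:ℝ) T, HasDerivAt τ (τ' t) t)
    (hτ_lb : ∀ t ∈ Ico (0:ℝ) T, τ₀ ≤ τ t)
    (hτ_grow : ∀ t ∈ Ico (0:ℝ) T, |τ' t| ≤ C₃ * τ t ^ ((5:ℝ)/4))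
    (α₁ β₁ : ℝ) (hω : 0 < α₁ ∧ α₁ < β₁ ∧ β₁ < 1) :
    ∃ C > (0:ℝ),
      ∀ (b : ℝ → ℝ) (c₁ d₁ z zx zt azxx h G : ℝ → ℝ → ℝ) (z₀ z₀' : ℝ → ℝ),
        ContinuousOn b (Icc 0 T) →
        (∀ t ∈ Icc (0:ℝ) T, m ≤ b t ∧ b t ≤ M) →
        (∀ x t, |c₁ x t| ≤ Λ ∧ |d₁ x t| ≤ Λ) →
        ContinuousOn (fun p : ℝ × ℝ => z p.1 p.2) (Icc 0 1 ×ˢ Icc 0 T) →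
        (∀ x ∈ Ioo (0:ℝ) 1, ∀ t ∈ Ico (0:ℝ) T, HasDerivAt (fun w => z w t) (zx x t) x) →
        (∀ x ∈ Ioo (0:ℝ) 1, ∀ t ∈ Ioo (0:ℝ) T,
          HasDerivAt (fun w => a w * zx w t) (azxx x t) x) →
        (∀ x ∈ Ioo (0:ℝ) 1, ∀ t ∈ Ioo (0:ℝ) T, HasDerivAt (fun u => z x u) (zt x t) t) →
        (∀ x ∈ Ioo (0:ℝ) 1, ∀ t ∈ Ioo (0:ℝ) T,
          zt x t - b t * azxx x t - d₁ x t * Real.sqrt (a x) * zx x t + c₁ x t * z x t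
            = (if x ∈ Ioo α₁ β₁ then h x t else 0) + G x t) →
        (∀ t ∈ Icc (0:ℝ) T, z 0 t = 0 ∧ z 1 t = 0) →
        (∀ x, z x 0 = z₀ x) →
        (∀ x ∈ Ioo (0:ℝ) 1, HasDerivAt z₀ (z₀' x) x) →
        IntegrableOn (fun x => a x * z₀' x ^ 2) (Ioo 0 1) →
        IntegrableOn
          (fun p : ℝ × ℝ => rho1 s K₁ K₂ τ p.2 ^ 2 *
            (zt p.1 p.2 ^ 2 + azxx p.1 p.2 ^ 2)) (Ioo 0 1 ×ˢ Ioo 0 T) →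
        IntegrableOn
          (fun p : ℝ × ℝ => rho0 s K₁ τ p.2 ^ 2 * z p.1 p.2 ^ 2)
          (Ioo 0 1 ×ˢ Ioo 0 T) →
        IntegrableOn
          (fun p : ℝ × ℝ => rho1 s K₁ K₂ τ p.2 ^ 2 * h p.1 p.2 ^ 2)
          (Ioo α₁ β₁ ×ˢ Ioo 0 T) →
        IntegrableOn
          (fun p : ℝ × ℝ => rho2 s K₁ K₂ ζ₀ τ p.2 ^ 2 * G p.1 p.2 ^ 2)
          (Ioo 0 1 ×ˢ Ioo 0 T) →
        (∀ t ∈ Ico (0:ℝ) T,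
          IntegrableOn (fun x => a x * zx x t ^ 2) (Ioo 0 1)) →
        ∀ t ∈ Ico (0:ℝ) T,
          rho1 s K₁ K₂ τ t ^ 2 * (∫ x in Ioo (0:ℝ) 1, a x * zx x t ^ 2) +
              (∫ p in Ioo (0:ℝ) 1 ×ˢ Ioo (0:ℝ) T,
                rho1 s K₁ K₂ τ p.2 ^ 2 * (zt p.1 p.2 ^ 2 + azxx p.1 p.2 ^ 2))
            ≤ C * ((∫ p in Ioo (0:ℝ) 1 ×ˢ Ioo (0:ℝ) T,
                      rho0 s K₁ τ p.2 ^ 2 * z p.1 p.2 ^ 2) +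
                   (∫ p in Ioo α₁ β₁ ×ˢ Ioo (0:ℝ) T,
                      rho1 s K₁ K₂ τ p.2 ^ 2 * h p.1 p.2 ^ 2) +
                   (∫ p in Ioo (0:ℝ) 1 ×ˢ Ioo (0:ℝ) T,
                      rho2 s K₁ K₂ ζ₀ τ p.2 ^ 2 * G p.1 p.2 ^ 2) +
                   (∫ x in Ioo (0:ℝ) 1, z₀ x ^ 2) +
                   (∫ x in Ioo (0:ℝ) 1, a x * z₀' x ^ 2)) := by
  obtain ⟨R, ρ', hρ⟩ := exists_isDominatedWeight_rho1 hs.le hK₁.le hK₂ hτ₀ hζ₀ hC₃.le hτ_deriv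
    hτ_lb hτ_grow
  obtain ⟨C, hC, hbound⟩ := second_weighted_energy_estimate_general zero_lt_one ha_cont ha_nonneg
    hm (hm.trans_le hmM) Λ hρ (measurableSet_Ioo (a := α₁) (b := β₁))
    (Ioo_subset_Ioo hω.1.le hω.2.2.le)
  refine ⟨C, hC, fun b c₁ d₁ z zx zt azxx h G z₀ z₀' _ hb hcd hz hzx hflux hzt heq hbc hz_zero hz₀ _
    hgain hIz hIh hIG henergy t ht ↦ ?_⟩
  have hclassical : IsClassicalOn a 0 1 (Ico 0 T) z zx zt azxx :=
    { continuousOn := hz.mono (prod_mono_right Ico_subset_Icc_self)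
      hasDerivAt_space := hzx
      hasDerivAt_flux := by rwa [interior_Ico]
      hasDerivAt_time := by rwa [interior_Ico]
      left_eq_zero := fun t ht ↦ (hbc t (Ico_subset_Icc_self ht)).1
      right_eq_zero := fun t ht ↦ (hbc t (Ico_subset_Icc_self ht)).2
      integrableOn_energy := henergy }
  refine (hbound (fun _ ↦ b) c₁ d₁ z zx zt azxx h G z₀ z₀' hclassical
    (fun x _ t ht ↦ ⟨hb t (Ioo_subset_Icc_self ht), hcd x t⟩) heq (fun x _ ↦ hz_zero x) hz₀ hgain
    hIz hIh hIG t ht).trans (mul_le_mul_of_nonneg_left ?_ hC.le)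
  exact add_le_add_left (le_add_of_nonneg_right (integral_nonneg fun x ↦ sq_nonneg (z₀ x))) _
end
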